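/- arXiv:0807.4243 — 4 statements merged into one kernel-verified Lean document; each statement's English description precedes it below -/
import Mathlib

section
/- Let F be an algebraically closed field, S = F[x,y], and let V ⊆ S_d (with d ≥ 1) be an F-vector space of forms of degree d whose greatest common divisor is 1; let I ⊆ S be the ideal generated by V. For a subspace V' ⊆ V, let r_{V'} denote the degree of the greatest common divisor of the forms in V', and set r := max{ r_{V'} : V' ⊆ V a linear subspace of codimension 1 }. Then for all sufficiently large t one has reg I^t = dt + r − 1; equivalently, for all sufficiently large t, every form of S of degree ≥ dt + r − 1 lies in I^t, while not every form of degree dt + r − 2 lies in I^t. -/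
open MvPolynomial

/-- `g` is a greatest common divisor of the set of polynomials `V'`. -/
def IsGCDOf {F : Type*} [Field F] (g : MvPolynomial (Fin 2) F)
    (V' : Set (MvPolynomial (Fin 2) F)) : Prop :=
  (∀ v ∈ V', g ∣ v) ∧ ∀ h : MvPolynomial (Fin 2) F, (∀ v ∈ V', h ∣ v) → h ∣ g


section aux
variable {F : Type*} [Field F]

theorem aux_comp_mul {f : MvPolynomial (Fin 2) F} {d : ℕ} (hf : f.IsHomogeneous d) (a : MvPolynomial (Fin 2) F) (n : ℕ) :
    homogeneousComponent n (f * a) = if d ≤ n then f * homogeneousComponent (n - d) a else 0 := by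
  let _ := MvPolynomial.gradedAlgebra (σ := Fin 2) (R := F)
  have key : ∀ (q : MvPolynomial (Fin 2) F) (i : ℕ),
      (DirectSum.decompose (homogeneousSubmodule (Fin 2) F) q i : MvPolynomial (Fin 2) F) =
      homogeneousComponent i q := fun q i => decomposition.decompose'_apply q i
  have := DirectSum.coe_decompose_mul_of_left_mem (homogeneousSubmodule (Fin 2) F) (b := a) n
    ((mem_homogeneousSubmodule d f).2 hf)
  rw [key, key] at this
  exact this

theorem aux_hom_mem_pow {p : MvPolynomial (Fin 2) F} {n k : ℕ} (hp : p.IsHomogeneous n) (h : k ≤ n) :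
    p ∈ idealOfVars (Fin 2) F ^ k := by
  rw [mem_pow_idealOfVars_iff]
  intro x hx
  rw [MvPolynomial.mem_support_iff] at hx
  by_contra hc
  exact hx (hp.coeff_eq_zero (by omega))

theorem aux_comp_of_mem_pow {p : MvPolynomial (Fin 2) F} {n k : ℕ} (hp : p ∈ idealOfVars (Fin 2) F ^ k)
    (h : n < k) : homogeneousComponent n p = 0 := by
  rw [mem_pow_idealOfVars_iff'] at hp
  ext x
  rw [coeff_homogeneousComponent]
  split_ifs with hx
  · rw [hp x (by omega)]; simp
  · simp

theorem aux_sub_comp {p : MvPolynomial (Fin 2) F} {k : ℕ} (hp : p ∈ idealOfVars (Fin 2) F ^ k) :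
    p - homogeneousComponent k p ∈ idealOfVars (Fin 2) F ^ (k + 1) := by
  rw [mem_pow_idealOfVars_iff'] at hp ⊢
  intro x hx
  rw [coeff_sub, coeff_homogeneousComponent]
  split_ifs with h
  · simp
  · rw [hp x (by omega)]; simp

theorem aux_comp_mul_low {g h : MvPolynomial (Fin 2) F} {a b : ℕ} (hg : g ∈ idealOfVars (Fin 2) F ^ a)
    (hh : h ∈ idealOfVars (Fin 2) F ^ b) :
    homogeneousComponent (a + b) (g * h) = homogeneousComponent a g * homogeneousComponent b h := by
  have h1 : g * h = homogeneousComponent a g * h + (g - homogeneousComponent a g) * h := by ring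
  have h2 : (g - homogeneousComponent a g) * h ∈ idealOfVars (Fin 2) F ^ (a + 1 + b) := by
    rw [pow_add]; exact Ideal.mul_mem_mul (aux_sub_comp hg) hh
  rw [h1, map_add, aux_comp_of_mem_pow h2 (by omega), add_zero,
    aux_comp_mul (homogeneousComponent_isHomogeneous a g)]
  simp

theorem aux_exists_low {g : MvPolynomial (Fin 2) F} (hg : g ≠ 0) :
    ∃ a, g ∈ idealOfVars (Fin 2) F ^ a ∧ homogeneousComponent a g ≠ 0 := by
  classical
  have h : ∃ k, g ∉ idealOfVars (Fin 2) F ^ (k + 1) := by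
    refine ⟨g.totalDegree, fun hc => ?_⟩
    obtain ⟨x, hx⟩ := MvPolynomial.ne_zero_iff.1 hg
    rw [mem_pow_idealOfVars_iff] at hc
    have hx := MvPolynomial.mem_support_iff.2 hx
    have := hc x hx
    have := MvPolynomial.le_totalDegree hx
    rw [Finsupp.degree_apply] at *
    simp only [Finsupp.sum] at this
    omega
  refine ⟨Nat.find h, ?_, fun h0 => ?_⟩
  · rcases hk : Nat.find h with _ | k
    · simp
    · have := Nat.find_min h (m := k) (by omega)
      simpa using this
  · have hmem : g ∈ idealOfVars (Fin 2) F ^ (Nat.find h) := by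
      rcases hk : Nat.find h with _ | k
      · simp
      · have := Nat.find_min h (m := k) (by omega)
        simpa using this
    have := aux_sub_comp hmem
    rw [h0, sub_zero] at this
    exact Nat.find_spec h this

theorem aux_low_le {g : MvPolynomial (Fin 2) F} {a : ℕ} (h : homogeneousComponent a g ≠ 0) :
    a ≤ g.totalDegree := by
  by_contra hc
  exact h (homogeneousComponent_eq_zero _ _ (by omega))

theorem aux_hom_of_low {g : MvPolynomial (Fin 2) F} (h : g ∈ idealOfVars (Fin 2) F ^ g.totalDegree) :
    g.IsHomogeneous g.totalDegree := by
  rw [mem_pow_idealOfVars_iff'] at h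
  intro x hx
  have h2 := MvPolynomial.le_totalDegree (MvPolynomial.mem_support_iff.2 hx)
  have h1 : ¬ x.degree < g.totalDegree := fun hc => hx (h x hc)
  change Finsupp.weight (fun _ => 1) x = _
  rw [← Finsupp.degree_eq_weight_one]
  rw [Finsupp.degree_apply] at *
  simp only [Finsupp.sum] at h2
  omega

theorem aux_hom_of_mul {g h : MvPolynomial (Fin 2) F} {n : ℕ} (hp : (g * h).IsHomogeneous n)
    (h0 : g * h ≠ 0) : g.IsHomogeneous g.totalDegree ∧ h.IsHomogeneous h.totalDegree ∧
      g.totalDegree + h.totalDegree = n := by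
  have hg0 : g ≠ 0 := left_ne_zero_of_mul h0
  have hh0 : h ≠ 0 := right_ne_zero_of_mul h0
  obtain ⟨a, ha, ha'⟩ := aux_exists_low hg0
  obtain ⟨b, hb, hb'⟩ := aux_exists_low hh0
  have h1 := totalDegree_mul_of_isDomain hg0 hh0
  rw [hp.totalDegree h0] at h1
  have h2 := aux_comp_mul_low ha hb
  have h3 : homogeneousComponent (a + b) (g * h) ≠ 0 := by
    rw [h2]; exact mul_ne_zero ha' hb'
  have h4 : a + b = n := by
    by_contra hc
    apply h3
    rw [homogeneousComponent_of_mem hp, if_neg (by omega)]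
  have h5 := aux_low_le ha'
  have h6 := aux_low_le hb'
  have h7 : a = g.totalDegree := by omega
  have h8 : b = h.totalDegree := by omega
  subst h7 h8
  exact ⟨aux_hom_of_low ha, aux_hom_of_low hb, h4⟩

theorem aux_finrank (n : ℕ) : Module.finrank F (homogeneousSubmodule (Fin 2) F n) = n + 1 := by
  rw [homogeneousSubmodule_eq_finsupp_supported]
  let e := AddMonoidAlgebra.supportedEquivFinsupp (S := F) (R := F) {d : Fin 2 →₀ ℕ | d.degree = n}
  have e2 : {d : Fin 2 →₀ ℕ | d.degree = n} ≃ Fin (n + 1) :=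
    { toFun := fun d => ⟨d.1 0, by
        have := d.2; simp only [Set.mem_ofPred_eq, Finsupp.degree_eq_sum, Fin.sum_univ_two] at this; omega⟩
      invFun := fun i => ⟨Finsupp.equivFunOnFinite.symm ![i.1, n - i.1], by
        simp [Finsupp.degree_eq_sum]; omega⟩
      left_inv := fun d => by
        have := d.2; simp only [Set.mem_ofPred_eq, Finsupp.degree_eq_sum, Fin.sum_univ_two] at this
        ext i
        fin_cases i
        · simp
        · simp; omega
      right_inv := fun i => by simp }
  have : Fintype {d : Fin 2 →₀ ℕ | d.degree = n} := Fintype.ofEquiv _ e2.symm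
  refine (LinearEquiv.finrank_eq e).trans ?_
  rw [Module.finrank_finsupp_self, Fintype.card_congr e2, Fintype.card_fin]

instance aux_fd (n : ℕ) : Module.Finite F (homogeneousSubmodule (Fin 2) F n) :=
  Module.Finite.iff_fg.2 (homogeneousSubmodule_fg _ _ n)

/-- vanishing forms are divisible by the linear form -/
theorem aux_dvd_of_eval {p : MvPolynomial (Fin 2) F} {n : ℕ} (hp : p.IsHomogeneous n) (a : Fin 2 → F)
    (ha : a ≠ 0) (h : aeval a p = 0) : (C (a 1) * X 0 - C (a 0) * X 1 : MvPolynomial (Fin 2) F) ∣ p := by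
  set l : MvPolynomial (Fin 2) F := C (a 1) * X 0 - C (a 0) * X 1 with hl
  rw [← Ideal.mem_span_singleton, ← Ideal.Quotient.eq_zero_iff_mem]
  set π := Ideal.Quotient.mkₐ F (Ideal.span {l})
  change π p = 0
  have hl0 : π l = 0 := Ideal.Quotient.eq_zero_iff_mem.2 (Ideal.mem_span_singleton_self l)
  have hrel : π (C (a 1)) * π (X 0) = π (C (a 0)) * π (X 1) := by
    have h' : π (C (a 1) * X 0 - C (a 0) * X 1) = 0 := hl0
    rw [map_sub, map_mul, map_mul, sub_eq_zero] at h'; exact h'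
  obtain ⟨j, hj⟩ : ∃ j, a j ≠ 0 := Function.ne_iff.1 ha
  -- π (X i) = a i * c where c = π (X j) / a j
  set c := π (C (a j)⁻¹ * X j) with hc
  have hX : ∀ i, π (X i) = algebraMap F _ (a i) * c := by
    intro i
    have hinv : π (C (a j)) * π (C (a j)⁻¹) = 1 := by
      rw [← map_mul, ← C_mul, mul_inv_cancel₀ hj]; simp
    have hC : ∀ r, algebraMap F (MvPolynomial (Fin 2) F ⧸ Ideal.span {l}) r = π (C r) := fun r => rfl
    rw [hC, hc, map_mul]
    fin_cases i <;> fin_cases j <;> simp only [Fin.zero_eta, Fin.mk_one, Fin.isValue] at * 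
    · linear_combination (-π (X 0)) * hinv
    · linear_combination (-π (X 0)) * hinv + π (C (a 1)⁻¹) * hrel
    · linear_combination (-π (X 1)) * hinv - π (C (a 0)⁻¹) * hrel
    · linear_combination (-π (X 1)) * hinv
  have h1 : π p = aeval (fun i => π (X i)) p := by
    rw [← MvPolynomial.comp_aeval_apply]; simp
  have h2 : aeval (fun i => algebraMap F (MvPolynomial (Fin 2) F ⧸ Ideal.span {l}) (a i) * c) p
      = c ^ n * algebraMap F _ (aeval a p) := by
    rw [MvPolynomial.aeval_def, MvPolynomial.eval₂_eq', MvPolynomial.aeval_def, MvPolynomial.eval₂_eq',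
      map_sum, Finset.mul_sum]
    refine Finset.sum_congr rfl fun x hx => ?_
    have := hp.degree_eq_sum_deg_support hx
    simp only [mul_pow, Finset.prod_mul_distrib, Finset.prod_pow_eq_pow_sum, map_mul, map_prod, map_pow]
    have h3 : ∑ i, x i = n := by
      rw [← Finsupp.degree_eq_sum]
      by_contra hne
      exact (MvPolynomial.mem_support_iff.1 hx) (hp.coeff_eq_zero hne)
    rw [h3]
    simp
    ring
  rw [h1]
  simp_rw [hX]
  rw [h2, h, map_zero, mul_zero]

theorem aux_lin_not_unit (a : Fin 2 → F) :
    ¬ IsUnit (C (a 1) * X 0 - C (a 0) * X 1 : MvPolynomial (Fin 2) F) := by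
  intro h
  have := h.map (MvPolynomial.constantCoeff (σ := Fin 2) (R := F))
  simp at this

theorem aux_primary [IsAlgClosed F] (U : Set (MvPolynomial (Fin 2) F)) 
    (hU : ∀ u ∈ U, ∃ d, u.IsHomogeneous d)
    (hgcd : ∀ h : MvPolynomial (Fin 2) F, (∀ v ∈ U, h ∣ v) → IsUnit h) :
    ∃ N, idealOfVars (Fin 2) F ^ N ≤ Ideal.span U := by
  apply Ideal.exists_pow_le_of_le_radical_of_fg _ (idealOfVars_fg _ _)
  rw [← vanishingIdeal_zeroLocus_eq_radical (K := F), idealOfVars, Ideal.span_le]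
  rintro _ ⟨i, rfl⟩
  change X i ∈ vanishingIdeal F _
  rw [mem_vanishingIdeal_iff]
  intro a ha
  rw [zeroLocus_span] at ha
  by_contra hne
  apply aux_lin_not_unit a
  apply hgcd
  intro v hv
  obtain ⟨d, hd⟩ := hU v hv
  refine aux_dvd_of_eval hd a ?_ (ha v hv)
  rintro rfl
  simp at hne

end aux

section aux2
variable {F : Type*} [Field F]

theorem aux_unit_of_deg_zero {g : MvPolynomial (Fin 2) F} (hg : g.IsHomogeneous 0) (h0 : g ≠ 0) :
    IsUnit g := by
  have h := ((totalDegree_zero_iff_isHomogeneous _).2 hg)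
  rw [totalDegree_eq_zero_iff_eq_C] at h
  rw [h] at h0 ⊢
  apply IsUnit.map
  rw [isUnit_iff_ne_zero]
  intro hc
  rw [hc] at h0
  simp at h0

theorem aux_pow_le_of_forms {n : ℕ} {J : Ideal (MvPolynomial (Fin 2) F)}
    (h : ∀ p : MvPolynomial (Fin 2) F, p.IsHomogeneous n → p ∈ J) :
    idealOfVars (Fin 2) F ^ n ≤ J := by
  rw [pow_idealOfVars_eq_span, Ideal.span_le]
  rintro _ ⟨x, hx, rfl⟩
  exact h _ (isHomogeneous_monomial _ hx)

/-- the bilinear multiplication map `(a, b) ↦ f a + g b` on forms -/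
noncomputable def auxMap {f g : MvPolynomial (Fin 2) F} {d e : ℕ} (hf : f.IsHomogeneous d)
    (hg : g.IsHomogeneous e) (i j n : ℕ) (h1 : d + i = n) (h2 : e + j = n) :
    (homogeneousSubmodule (Fin 2) F i × homogeneousSubmodule (Fin 2) F j) →ₗ[F]
      homogeneousSubmodule (Fin 2) F n where
  toFun x := ⟨f * x.1.1 + g * x.2.1, by
    have h3 : (f * x.1.1).IsHomogeneous n := h1 ▸ hf.mul x.1.2
    have h4 : (g * x.2.1).IsHomogeneous n := h2 ▸ hg.mul x.2.2
    exact h3.add h4⟩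
  map_add' x y := by ext1; simp; ring
  map_smul' c x := by ext1; simp

theorem aux_sylvester {f g : MvPolynomial (Fin 2) F} {d e : ℕ} (hd : 1 ≤ d) (hf : f.IsHomogeneous d)
    (hg : g.IsHomogeneous e) (hg0 : g ≠ 0) (hrel : IsRelPrime f g) :
    idealOfVars (Fin 2) F ^ (d + e - 1) ≤ Ideal.span {f, g} := by
  rcases Nat.eq_zero_or_pos e with he | he
  · subst he
    have : Ideal.span {f, g} = ⊤ :=
      Ideal.eq_top_of_isUnit_mem _ (Ideal.subset_span (by simp)) (aux_unit_of_deg_zero hg hg0)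
    rw [this]; exact le_top
  apply aux_pow_le_of_forms
  intro p hp
  let m := auxMap hf hg (e - 1) (d - 1) (d + e - 1) (by omega) (by omega)
  have hfin : Module.finrank F (homogeneousSubmodule (Fin 2) F (e - 1) ×
      homogeneousSubmodule (Fin 2) F (d - 1)) =
      Module.finrank F (homogeneousSubmodule (Fin 2) F (d + e - 1)) := by
    rw [Module.finrank_prod, aux_finrank, aux_finrank, aux_finrank]; omega
  have hinj : Function.Injective m := by
    rw [injective_iff_map_eq_zero]
    rintro ⟨⟨a, ha⟩, ⟨b, hb⟩⟩ hx
    have hx : f * a + g * b = 0 := congrArg Subtype.val hx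
    have h1 : g ∣ f * a := ⟨-b, by linear_combination hx⟩
    have h2 : g ∣ a := hrel.symm.dvd_of_dvd_mul_left h1
    have ha0 : a = 0 := by
      by_contra hne
      obtain ⟨c, rfl⟩ := h2
      have hh := aux_hom_of_mul ha hne
      have := hg.totalDegree hg0
      omega
    subst ha0
    have hb0 : b = 0 := by
      rw [mul_zero, zero_add] at hx
      exact (mul_eq_zero.1 hx).resolve_left hg0
    subst hb0
    rfl
  obtain ⟨⟨a, b⟩, hab⟩ := (LinearMap.injective_iff_surjective_of_finrank_eq_finrank hfin).1 hinj ⟨p, hp⟩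
  have hab : f * a.1 + g * b.1 = p := congrArg Subtype.val hab
  rw [Ideal.mem_span_pair]
  exact ⟨a.1, b.1, by rw [← hab]; ring⟩

/-- forms of degree `k - 1`, zero if `k = 0` -/
noncomputable def auxT (F : Type*) [Field F] : ℕ → Submodule F (MvPolynomial (Fin 2) F)
  | 0 => ⊥
  | k + 1 => homogeneousSubmodule (Fin 2) F k

instance (k : ℕ) : Module.Finite F (auxT F k) := by
  cases k
  · unfold auxT; infer_instance
  · unfold auxT; infer_instance

theorem auxT_finrank (k : ℕ) : Module.finrank F (auxT F k) = k := by
  cases k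
  · exact finrank_bot F _
  · exact aux_finrank _

theorem aux_lower {f g : MvPolynomial (Fin 2) F} {d e : ℕ} (hd : 1 ≤ d) (he : 1 ≤ e)
    (hf : f.IsHomogeneous d) (hg : g.IsHomogeneous e) :
    ∃ p ∈ homogeneousSubmodule (Fin 2) F (d + e - 2), p ∉ Ideal.span {f, g} := by
  by_contra! hc
  have hle : homogeneousSubmodule (Fin 2) F (d + e - 2) ≤
      (auxT F (e - 1)).map (LinearMap.mulLeft F f) ⊔ (auxT F (d - 1)).map (LinearMap.mulLeft F g) := by
    intro p hp
    obtain ⟨a, b, hab⟩ := Ideal.mem_span_pair.1 (hc p hp)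
    have h1 : p = homogeneousComponent (d + e - 2) (f * a) + homogeneousComponent (d + e - 2) (g * b) := by
      rw [← map_add, mul_comm f, mul_comm g, hab, homogeneousComponent_eq_self hp]
    rw [h1, aux_comp_mul hf, aux_comp_mul hg]
    apply Submodule.add_mem_sup
    · split_ifs with h
      · refine ⟨_, ?_, rfl⟩
        obtain ⟨k, rfl⟩ : ∃ k, e = k + 2 := ⟨e - 2, by omega⟩
        have : d + (k + 2) - 2 - d = k := by omega
        rw [this]
        exact homogeneousComponent_mem _ _
      · exact Submodule.zero_mem _
    · split_ifs with h
      · refine ⟨_, ?_, rfl⟩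
        obtain ⟨k, rfl⟩ : ∃ k, d = k + 2 := ⟨d - 2, by omega⟩
        have : k + 2 + e - 2 - e = k := by omega
        rw [this]
        exact homogeneousComponent_mem _ _
      · exact Submodule.zero_mem _
  have h1 := Submodule.finrank_mono hle
  have h2 := Submodule.finrank_add_le_finrank_add_finrank
    ((auxT F (e - 1)).map (LinearMap.mulLeft F f)) ((auxT F (d - 1)).map (LinearMap.mulLeft F g))
  have h3 := Submodule.finrank_map_le (LinearMap.mulLeft F f) (auxT F (e - 1))
  have h4 := Submodule.finrank_map_le (LinearMap.mulLeft F g) (auxT F (d - 1))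
  rw [auxT_finrank] at h3 h4
  rw [aux_finrank] at h1
  omega

theorem aux_gcd_exists (V : Submodule F (MvPolynomial (Fin 2) F)) (hV : V.FG) :
    ∃ g, IsGCDOf g (V : Set (MvPolynomial (Fin 2) F)) := by
  classical
  obtain ⟨s, rfl⟩ := hV
  let _ := UniqueFactorizationMonoid.strongNormalizationMonoid (α := MvPolynomial (Fin 2) F)
  let _ := UniqueFactorizationMonoid.toNormalizedGCDMonoid (MvPolynomial (Fin 2) F)
  refine ⟨s.gcd id, ?_, ?_⟩
  · intro v hv
    induction hv using Submodule.span_induction with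
    | mem x hx => exact Finset.gcd_dvd (f := id) hx
    | zero => exact dvd_zero _
    | add x y _ _ hx hy => exact dvd_add hx hy
    | smul c x _ hx => rw [smul_eq_C_mul]; exact hx.mul_left _
  · intro h hh
    exact Finset.dvd_gcd fun b hb => hh b (Submodule.subset_span hb)

theorem aux_gcd_primary [IsAlgClosed F] {d : ℕ} (V : Submodule F (MvPolynomial (Fin 2) F))
    (hVd : V ≤ homogeneousSubmodule (Fin 2) F d) (hV : V ≠ ⊥) {g : MvPolynomial (Fin 2) F}
    (hg : IsGCDOf g (V : Set (MvPolynomial (Fin 2) F))) :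
    g ≠ 0 ∧ g.IsHomogeneous g.totalDegree ∧ ∃ N, ∀ s ∈ idealOfVars (Fin 2) F ^ N,
      g * s ∈ Ideal.span (V : Set (MvPolynomial (Fin 2) F)) := by
  obtain ⟨v, hv, hv0⟩ := Submodule.exists_mem_ne_zero_of_ne_bot hV
  have hg0 : g ≠ 0 := by
    rintro rfl
    exact hv0 (zero_dvd_iff.1 (hg.1 v hv))
  refine ⟨hg0, ?_, ?_⟩
  · obtain ⟨c, rfl⟩ := hg.1 v hv
    exact (aux_hom_of_mul (hVd hv) hv0).1
  · obtain ⟨N, hN⟩ := aux_primary {u : MvPolynomial (Fin 2) F | g * u ∈ V} (by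
      intro u hu
      by_cases h0 : u = 0
      · exact ⟨0, h0 ▸ isHomogeneous_zero _ _ _⟩
      · exact ⟨_, (aux_hom_of_mul (hVd hu) (mul_ne_zero hg0 h0)).2.1⟩) (by
      intro h hh
      have : g * h ∣ g := by
        apply hg.2
        intro v hv
        obtain ⟨c, rfl⟩ := hg.1 v hv
        exact mul_dvd_mul_left g (hh c hv)
      obtain ⟨c, hc⟩ := this
      refine IsUnit.of_mul_eq_one c (mul_left_cancel₀ hg0 ?_)
      rw [← mul_assoc, ← hc, mul_one])
    refine ⟨N, fun s hs => ?_⟩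
    have := hN hs
    clear hs
    induction this using Submodule.span_induction with
    | mem x hx => exact Ideal.subset_span hx
    | zero => simp
    | add x y _ _ hx hy => rw [mul_add]; exact Ideal.add_mem _ hx hy
    | smul c x _ hx =>
      rw [smul_eq_mul, mul_left_comm]
      exact Ideal.mul_mem_left _ _ hx

theorem aux_nak [IsAlgClosed F] {A M : Type*} [CommRing A] [Algebra F A] [Algebra.FiniteType F A]
    [AddCommGroup M] [Module A M] [Module.Finite A M] (K : Submodule A M) (v : A)
    (h : ∀ φ : A →ₐ[F] F, φ v ≠ 0 → ⊤ ≤ K ⊔ (RingHom.ker φ • ⊤ : Submodule A M)) :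
    v ∈ (Module.annihilator A (M ⧸ K)).radical := by
  have : IsJacobsonRing A := isJacobsonRing_of_finiteType (A := F)
  rw [Ideal.radical_eq_jacobson, Ideal.jacobson, Ideal.mem_sInf]
  rintro P ⟨hP, hPmax⟩
  by_contra hv
  let _ : Field (A ⧸ P) := Ideal.Quotient.field P
  have hfin : Module.Finite F (A ⧸ P) := finite_of_finite_type_of_isJacobsonRing F (A ⧸ P)
  have hbij : Function.Bijective (algebraMap F (A ⧸ P)) :=
    IsAlgClosed.algebraMap_bijective_of_isIntegral
  let e : F ≃ₐ[F] (A ⧸ P) := AlgEquiv.ofBijective (Algebra.ofId F (A ⧸ P)) hbij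
  let φ : A →ₐ[F] F := (e.symm : (A ⧸ P) →ₐ[F] F).comp (Ideal.Quotient.mkₐ F P)
  have hφ : ∀ a, φ a = 0 ↔ a ∈ P := by
    intro a
    change e.symm (Ideal.Quotient.mk P a) = 0 ↔ _
    rw [EmbeddingLike.map_eq_zero_iff, Ideal.Quotient.eq_zero_iff_mem]
  have hker : RingHom.ker φ = P := by ext a; rw [RingHom.mem_ker, hφ]
  have h1 := h φ (fun hc => hv ((hφ v).1 hc))
  rw [hker] at h1
  have h2 : (⊤ : Submodule A (M ⧸ K)) ≤ P • ⊤ := by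
    have := Submodule.map_mono (f := K.mkQ) h1
    rw [Submodule.map_sup, Submodule.map_smul'', Submodule.map_top, Submodule.range_mkQ] at this
    simpa using this
  obtain ⟨r, hr, hr'⟩ := Submodule.exists_sub_one_mem_and_smul_eq_zero_of_fg_of_le_smul P _
    (Module.Finite.fg_top) h2
  have hrJ : r ∈ P := hP (Module.mem_annihilator.2 fun m => hr' m trivial)
  exact hPmax.ne_top ((Ideal.eq_top_iff_one P).2 (by simpa using P.sub_mem hrJ hr))

theorem aux_nak2 [IsAlgClosed F] {A M : Type*} [CommRing A] [Algebra F A] [Algebra.FiniteType F A]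
    [AddCommGroup M] [Module A M] [Module.Finite A M] (K : Submodule A M) (T : Set A)
    (h : ∀ v ∈ T, ∀ φ : A →ₐ[F] F, φ v ≠ 0 → ⊤ ≤ K ⊔ (RingHom.ker φ • ⊤ : Submodule A M)) :
    ∃ k, ∀ j ∈ Ideal.span T ^ k, ∀ m : M, j • m ∈ K := by
  have hnoeth : IsNoetherianRing A := Algebra.FiniteType.isNoetherianRing F A
  have hBJ : Ideal.span T ≤ (Module.annihilator A (M ⧸ K)).radical := by
    rw [Ideal.span_le]
    exact fun v hv => aux_nak K v (h v hv)
  obtain ⟨k, hk⟩ := Ideal.exists_pow_le_of_le_radical_of_fg hBJ (IsNoetherian.noetherian _)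
  refine ⟨k, fun j hj m => ?_⟩
  have h1 := Module.mem_annihilator.1 (hk hj) (K.mkQ m)
  rwa [← map_smul, Submodule.mkQ_apply, Submodule.Quotient.mk_eq_zero] at h1

end aux2

section aux3
variable {F : Type*} [Field F]

theorem aux_mem_of_comp {R : Type*} [CommRing R] {A : Type*} [CommRing A]
    [Algebra A (MvPolynomial (Fin 2) R)]
    (D : Submodule A (MvPolynomial (Fin 2) R))
    (p : MvPolynomial (Fin 2) R) (h : ∀ n, homogeneousComponent n p ∈ D) : p ∈ D := by
  rw [← sum_homogeneousComponent p]
  exact Submodule.sum_mem _ fun i _ => h i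

theorem aux_finite {d N : ℕ} (hd : 1 ≤ d) (V : Submodule F (MvPolynomial (Fin 2) F))
    (hVd : V ≤ homogeneousSubmodule (Fin 2) F d)
    (hN : idealOfVars (Fin 2) F ^ N ≤ Ideal.span (V : Set (MvPolynomial (Fin 2) F))) :
    Module.Finite (Algebra.adjoin F (V : Set (MvPolynomial (Fin 2) F))) (MvPolynomial (Fin 2) F) := by
  obtain ⟨s, hs⟩ := Module.Finite.iff_fg.1
    (inferInstance : Module.Finite F (restrictTotalDegree (Fin 2) F N))
  set A := Algebra.adjoin F (V : Set (MvPolynomial (Fin 2) F)) with hA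
  refine ⟨⟨s, ?_⟩⟩
  set D : Submodule A (MvPolynomial (Fin 2) F) := Submodule.span A (s : Set (MvPolynomial (Fin 2) F)) with hD
  have hsmall : ∀ p : MvPolynomial (Fin 2) F, p.totalDegree ≤ N → p ∈ D := by
    intro p hp
    rw [← mem_restrictTotalDegree, ← hs] at hp
    exact Submodule.span_subset_span F A _ hp
  have hform : ∀ n, ∀ p : MvPolynomial (Fin 2) F, p.IsHomogeneous n → p ∈ D := by
    intro n
    induction n using Nat.strong_induction_on with
    | _ n ih =>
      intro p hp
      by_cases hn : n ≤ N
      · exact hsmall p (hp.totalDegree_le.trans hn)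
      have hmem := hN (aux_hom_mem_pow hp (by omega : N ≤ n))
      have key : ∀ q ∈ Ideal.span (V : Set (MvPolynomial (Fin 2) F)), ∀ a,
          homogeneousComponent n (q * a) ∈ D := by
        intro q hq
        induction hq using Submodule.span_induction with
        | mem v hv =>
          intro a
          rw [aux_comp_mul (hVd hv)]
          split_ifs with h
          · exact D.smul_mem (⟨v, Algebra.subset_adjoin hv⟩ : A)
              (ih (n - d) (by omega) _ (homogeneousComponent_isHomogeneous _ _))
          · exact D.zero_mem
        | zero => intro a; simp
        | add x y _ _ hx hy =>
          intro a; rw [add_mul, map_add]; exact D.add_mem (hx a) (hy a)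
        | smul c x _ hx =>
          intro a
          rw [smul_eq_mul, mul_comm c, mul_assoc]; exact hx _
      have := key p hmem 1
      rwa [mul_one, homogeneousComponent_eq_self hp] at this
  rw [eq_top_iff]
  intro p _
  exact aux_mem_of_comp D p fun n => hform n _ (homogeneousComponent_isHomogeneous _ _)

theorem aux_K {d r : ℕ} (hd : 1 ≤ d) (hr : 1 ≤ r) (V : Submodule F (MvPolynomial (Fin 2) F))
    (hVd : V ≤ homogeneousSubmodule (Fin 2) F d)
    (q : MvPolynomial (Fin 2) F)
    (hq : q ∈ Submodule.span (Algebra.adjoin F (V : Set (MvPolynomial (Fin 2) F)))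
      {p : MvPolynomial (Fin 2) F | p.totalDegree ≤ r + d - 2}) (t k : ℕ) (hk : d * t + r - 1 ≤ k) :
    homogeneousComponent k q ∈ Ideal.span (V : Set (MvPolynomial (Fin 2) F)) ^ t := by
  set I := Ideal.span (V : Set (MvPolynomial (Fin 2) F)) with hI
  have hcl : ∀ c ∈ Submonoid.closure (V : Set (MvPolynomial (Fin 2) F)),
      ∃ s, c ∈ I ^ s ∧ c.IsHomogeneous (d * s) := by
    intro c hc
    induction hc using Submonoid.closure_induction with
    | mem v hv => exact ⟨1, by rw [pow_one]; exact Ideal.subset_span hv, by rw [mul_one]; exact hVd hv⟩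
    | one => exact ⟨0, by simp, isHomogeneous_one _ _⟩
    | mul x y _ _ hx hy =>
      obtain ⟨s, h1, h2⟩ := hx
      obtain ⟨s', h3, h4⟩ := hy
      exact ⟨s + s', by rw [pow_add]; exact Ideal.mul_mem_mul h1 h3, by rw [mul_add]; exact h2.mul h4⟩
  have key : ∀ a ∈ Algebra.adjoin F (V : Set (MvPolynomial (Fin 2) F)),
      ∀ p : MvPolynomial (Fin 2) F, p.totalDegree ≤ r + d - 2 → homogeneousComponent k (a * p) ∈ I ^ t := by
    intro a ha p hp
    rw [← Subalgebra.mem_toSubmodule, Algebra.adjoin_eq_span] at ha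
    induction ha using Submodule.span_induction with
    | mem c hc =>
      obtain ⟨s, h1, h2⟩ := hcl c hc
      rw [aux_comp_mul h2]
      split_ifs with h
      · by_cases hdeg : p.totalDegree < k - d * s
        · rw [homogeneousComponent_eq_zero _ _ hdeg, mul_zero]; exact Ideal.zero_mem _
        · have hts : t ≤ s := by
            by_contra hlt
            have : d * (s + 1) ≤ d * t := Nat.mul_le_mul_left d (by omega)
            rw [mul_add] at this
            omega
          exact Ideal.mul_mem_right _ _ (Ideal.pow_le_pow_right hts h1)
      · exact Ideal.zero_mem _
    | zero => simp
    | add x y _ _ hx hy => rw [add_mul, map_add]; exact Ideal.add_mem _ hx hy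
    | smul c x _ hx =>
      rw [smul_mul_assoc, map_smul, smul_eq_C_mul]; exact Ideal.mul_mem_left _ _ hx
  have key2 : ∀ a ∈ Algebra.adjoin F (V : Set (MvPolynomial (Fin 2) F)),
      homogeneousComponent k (a * q) ∈ I ^ t := by
    induction hq using Submodule.span_induction with
    | mem p hp => exact fun a ha => key a ha p hp
    | zero => intro a _; simp
    | add x y _ _ hx hy =>
      intro a ha; rw [mul_add, map_add]; exact Ideal.add_mem _ (hx a ha) (hy a ha)
    | smul c x _ hx =>
      intro a ha
      have : a * (c • x) = (a * c.1) * x := by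
        rw [mul_assoc]; rfl
      rw [this]
      exact hx _ (Subalgebra.mul_mem _ ha c.2)
  have := key2 1 (Subalgebra.one_mem _)
  rwa [one_mul] at this

theorem aux_not_unit {f : MvPolynomial (Fin 2) F} {d : ℕ} (hd : 1 ≤ d) (hf : f.IsHomogeneous d) :
    ¬ IsUnit f := by
  intro h
  have h1 := h.map (MvPolynomial.constantCoeff (σ := Fin 2) (R := F))
  rw [constantCoeff_eq, hf.coeff_eq_zero (by simp; omega)] at h1
  simp at h1

theorem aux_codim {d : ℕ} (hd : 1 ≤ d) (V : Submodule F (MvPolynomial (Fin 2) F))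
    (hVd : V ≤ homogeneousSubmodule (Fin 2) F d) [Module.Finite F V]
    (hgcd : ∀ h : MvPolynomial (Fin 2) F, (∀ v ∈ V, h ∣ v) → IsUnit h)
    (ψ : V →ₗ[F] F) (f : V) (hf : ψ f ≠ 0) :
    ∃ V' : Submodule F (MvPolynomial (Fin 2) F), V' ≤ V ∧
      Module.finrank F V' + 1 = Module.finrank F V ∧ V' ≠ ⊥ ∧
      (∀ v : V, v.1 ∈ V' ↔ ψ v = 0) ∧
      ∀ h : MvPolynomial (Fin 2) F, (∀ v ∈ V', h ∣ v) → h ∣ f.1 → IsUnit h := by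
  have hmem : ∀ v : V, v.1 ∈ (LinearMap.ker ψ).map V.subtype ↔ ψ v = 0 := by
    intro v; simp
  have hrel : ∀ h : MvPolynomial (Fin 2) F, (∀ v ∈ (LinearMap.ker ψ).map V.subtype, h ∣ v) →
      h ∣ f.1 → IsUnit h := by
    intro h h1 h2
    apply hgcd
    intro v hv
    have h3 : ((⟨v, hv⟩ : V) - (ψ ⟨v, hv⟩ / ψ f) • f).1 ∈ (LinearMap.ker ψ).map V.subtype := by
      rw [hmem]; simp [hf]
    have h4 : v = ((⟨v, hv⟩ : V) - (ψ ⟨v, hv⟩ / ψ f) • f).1 + C (ψ ⟨v, hv⟩ / ψ f) * f.1 := by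
      simp [smul_eq_C_mul]
    rw [h4]
    exact dvd_add (h1 _ h3) (h2.mul_left _)
  refine ⟨(LinearMap.ker ψ).map V.subtype, Submodule.map_subtype_le _ _, ?_, ?_, hmem, hrel⟩
  · have h1 := LinearMap.finrank_range_add_finrank_ker ψ
    have h2 : LinearMap.range ψ = ⊤ := LinearMap.range_eq_top.2
      (LinearMap.surjective (by rintro rfl; simp at hf))
    rw [h2, finrank_top, Module.finrank_self] at h1
    have h3 := (Submodule.equivSubtypeMap V (LinearMap.ker ψ)).finrank_eq
    omega
  · intro h0
    apply aux_not_unit hd (hVd f.2)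
    apply hrel _ _ dvd_rfl
    rw [h0]
    intro v hv
    rw [(Submodule.mem_bot F).1 hv]
    exact dvd_zero _

end aux3

section aux4
variable {F : Type*} [Field F]

theorem aux_K_add_g {d r e : ℕ} (hd : 1 ≤ d) (V : Submodule F (MvPolynomial (Fin 2) F))
    (hVd : V ≤ homogeneousSubmodule (Fin 2) F d)
    (A : Subalgebra F (MvPolynomial (Fin 2) F)) (hVA : ∀ v ∈ V, v ∈ A) {f g : MvPolynomial (Fin 2) F} (hf : f ∈ V)
    (hg : g.IsHomogeneous e) (hg0 : g ≠ 0) (her : e ≤ r) (hrel : IsRelPrime f g) 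
    (K : Submodule A (MvPolynomial (Fin 2) F))
    (hK : ∀ p : MvPolynomial (Fin 2) F, p.totalDegree ≤ r + d - 2 → p ∈ K)
    (q : MvPolynomial (Fin 2) F) : ∃ k ∈ K, ∃ b, q = k + g * b := by
  have hsyl := aux_sylvester hd (hVd hf) hg hg0 hrel
  have hform : ∀ n, ∀ p : MvPolynomial (Fin 2) F, p.IsHomogeneous n → ∃ k ∈ K, ∃ b, p = k + g * b := by
    intro n
    induction n using Nat.strong_induction_on with
    | _ n ih =>
      intro p hp
      by_cases hn : n ≤ r + d - 2
      · exact ⟨p, hK p (hp.totalDegree_le.trans hn), 0, by simp⟩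
      have hmem := hsyl (aux_hom_mem_pow hp (by omega : d + e - 1 ≤ n))
      obtain ⟨a, b, hab⟩ := Ideal.mem_span_pair.1 hmem
      have h1 : p = homogeneousComponent n (f * a) + homogeneousComponent n (g * b) := by
        rw [← map_add, mul_comm f, mul_comm g, hab, homogeneousComponent_eq_self hp]
      rw [aux_comp_mul (hVd hf), aux_comp_mul hg] at h1
      have hgb : ∃ b', (if e ≤ n then g * homogeneousComponent (n - e) b else 0) = g * b' := by
        split_ifs
        · exact ⟨_, rfl⟩
        · exact ⟨0, by simp⟩
      obtain ⟨b', hb'⟩ := hgb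
      rw [hb'] at h1
      split_ifs at h1 with h
      · obtain ⟨k, hk, b'', hb''⟩ := ih (n - d) (by omega) _
          (homogeneousComponent_isHomogeneous (n - d) a)
        refine ⟨f * k, K.smul_mem (⟨f, hVA f hf⟩ : A) hk, f * b'' + b', ?_⟩
        rw [h1, hb'']; ring
      · exact ⟨0, K.zero_mem, b', h1⟩
  choose k hk b hb using fun n => hform n _ (homogeneousComponent_isHomogeneous n q)
  refine ⟨∑ i ∈ Finset.range (q.totalDegree + 1), k i, K.sum_mem fun i _ => hk i,
    ∑ i ∈ Finset.range (q.totalDegree + 1), b i, ?_⟩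
  rw [Finset.mul_sum, ← Finset.sum_add_distrib]
  conv_lhs => rw [← sum_homogeneousComponent q]
  exact Finset.sum_congr rfl fun i _ => hb i

theorem aux_cover [IsAlgClosed F] {d r : ℕ} (hd : 1 ≤ d) (V : Submodule F (MvPolynomial (Fin 2) F))
    (hVd : V ≤ homogeneousSubmodule (Fin 2) F d) [Module.Finite F V]
    (hgcd : ∀ h : MvPolynomial (Fin 2) F, (∀ v ∈ V, h ∣ v) → IsUnit h)
    (hr : ∀ V' : Submodule F (MvPolynomial (Fin 2) F), V' ≤ V →
        Module.finrank F V' + 1 = Module.finrank F V → ∀ g : MvPolynomial (Fin 2) F,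
          IsGCDOf g (V' : Set (MvPolynomial (Fin 2) F)) → g.totalDegree ≤ r)
    (A : Subalgebra F (MvPolynomial (Fin 2) F)) (hVA : ∀ v ∈ V, v ∈ A)
    (K : Submodule A (MvPolynomial (Fin 2) F))
    (hK : ∀ p : MvPolynomial (Fin 2) F, p.totalDegree ≤ r + d - 2 → p ∈ K)
    (f : MvPolynomial (Fin 2) F) (hf : f ∈ V)
    (φ : A →ₐ[F] F)
    (hφ : φ ⟨f, hVA f hf⟩ ≠ 0) :
    ⊤ ≤ K ⊔ (RingHom.ker φ • ⊤ : Submodule A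
      (MvPolynomial (Fin 2) F)) := by
  let ψ : V →ₗ[F] F :=
    { toFun := fun v => φ ⟨v.1, hVA v.1 v.2⟩
      map_add' := fun x y => by rw [← map_add]; rfl
      map_smul' := fun c x => by
        rw [RingHom.id_apply, ← map_smul]; rfl }
  obtain ⟨V', hV'V, hrank, hV'0, hmem, hrelp⟩ := aux_codim hd V hVd hgcd ψ ⟨f, hf⟩ hφ
  have hfg : V'.FG := by
    have : Module.Finite F V' := Submodule.finiteDimensional_of_le hV'V
    exact Module.Finite.iff_fg.1 this
  obtain ⟨g, hg⟩ := aux_gcd_exists V' hfg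
  obtain ⟨hg0, hghom, N, hN⟩ := aux_gcd_primary V' (hV'V.trans hVd) hV'0 hg
  have her := hr V' hV'V hrank g hg
  have hrel : IsRelPrime f g := fun h h1 h2 => hrelp h (fun v hv => h2.trans (hg.1 v hv)) h1
  obtain ⟨W, hW⟩ : ∃ W : Submodule A (MvPolynomial (Fin 2) F), W = K ⊔ RingHom.ker φ • ⊤ := ⟨_, rfl⟩
  rw [← hW]
  have hKW : ∀ x ∈ K, x ∈ W := fun x hx => by rw [hW]; exact Submodule.mem_sup_left hx
  have hφW : ∀ x : A, φ x = 0 → ∀ m : MvPolynomial (Fin 2) F, x • m ∈ W := fun x hx m => by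
    rw [hW]
    apply Submodule.mem_sup_right
    exact Submodule.smul_mem_smul ((RingHom.mem_ker).2 hx) Submodule.mem_top
  clear hW
  have hspan : ∀ x ∈ Ideal.span (V' : Set (MvPolynomial (Fin 2) F)), ∀ a, x * a ∈ W := by
    intro x hx
    induction hx using Submodule.span_induction with
    | mem v hv =>
      intro a
      exact hφW ⟨v, hVA v (hV'V hv)⟩ ((hmem ⟨v, hV'V hv⟩).1 hv) a
    | zero => intro a; rw [zero_mul]; exact W.zero_mem
    | add x y _ _ hx hy => intro a; rw [add_mul]; exact W.add_mem (hx a) (hy a)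
    | smul c x _ hx => intro a; rw [smul_eq_mul, mul_comm c, mul_assoc]; exact hx _
  intro q _
  obtain ⟨k, hk, b, rfl⟩ := aux_K_add_g hd V hVd A hVA hf hghom hg0 her hrel K hK q
  refine W.add_mem (hKW _ hk) ?_
  set fA : A := ⟨f, hVA f hf⟩ with hfA
  set c := φ fA with hc
  have h1 : fA ^ N • (g * b) ∈ W := by
    have h2 : f ^ N ∈ idealOfVars (Fin 2) F ^ N :=
      aux_hom_mem_pow (IsHomogeneous.pow (hVd hf) N) (Nat.le_mul_of_pos_left N hd)
    have h3 := hspan _ (hN _ h2) b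
    have h4 : fA ^ N • (g * b) = g * f ^ N * b := by
      change f ^ N * (g * b) = _
      ring
    rwa [h4]
  have h2 : (algebraMap F A (c ^ N) - fA ^ N) • (g * b) ∈ W := by
    apply hφW
    simp only [map_sub, map_pow, AlgHom.commutes]
    simp [hc]
  have h3 : algebraMap F A (c ^ N) • (g * b) ∈ W := by
    have := W.add_mem h1 h2
    rwa [← add_smul, add_sub_cancel] at this
  have h4 := W.smul_mem (algebraMap F A ((c ^ N)⁻¹)) h3
  rwa [← mul_smul, ← map_mul, inv_mul_cancel₀ (pow_ne_zero _ hφ), map_one, one_smul] at h4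

theorem aux_upper [IsAlgClosed F] {d r : ℕ} (hd : 1 ≤ d) (hr1 : 1 ≤ r)
    (V : Submodule F (MvPolynomial (Fin 2) F))
    (hVd : V ≤ homogeneousSubmodule (Fin 2) F d) [Module.Finite F V]
    (hgcd : ∀ h : MvPolynomial (Fin 2) F, (∀ v ∈ V, h ∣ v) → IsUnit h)
    (hr : ∀ V' : Submodule F (MvPolynomial (Fin 2) F), V' ≤ V →
        Module.finrank F V' + 1 = Module.finrank F V → ∀ g : MvPolynomial (Fin 2) F,
          IsGCDOf g (V' : Set (MvPolynomial (Fin 2) F)) → g.totalDegree ≤ r) :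
    ∃ t₀ : ℕ, ∀ t ≥ t₀, idealOfVars (Fin 2) F ^ (d * t + r - 1) ≤
      Ideal.span (V : Set (MvPolynomial (Fin 2) F)) ^ t := by
  obtain ⟨N, hN⟩ := aux_primary (V : Set (MvPolynomial (Fin 2) F)) (fun u hu => ⟨d, hVd hu⟩) hgcd
  have hfin := aux_finite hd V hVd hN
  set A := Algebra.adjoin F (V : Set (MvPolynomial (Fin 2) F)) with hA
  have hft : Algebra.FiniteType F A := by
    obtain ⟨s, hs⟩ := Module.Finite.iff_fg.1 (inferInstance : Module.Finite F V)
    have : A = Algebra.adjoin F (s : Set (MvPolynomial (Fin 2) F)) := by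
      rw [hA, ← hs, Algebra.adjoin_span]
    rw [← Subalgebra.fg_iff_finiteType]
    exact ⟨s, this.symm⟩
  set K : Submodule A (MvPolynomial (Fin 2) F) :=
    Submodule.span A {p : MvPolynomial (Fin 2) F | p.totalDegree ≤ r + d - 2} with hK
  obtain ⟨k, hk⟩ := aux_nak2 (F := F) K {v : A | v.1 ∈ V} (fun v hv φ hφ =>
    aux_cover hd V hVd hgcd hr A (fun v hv => Algebra.subset_adjoin hv) K
      (fun p hp => Submodule.subset_span hp) v.1 hv φ hφ)
  set B : Ideal A := Ideal.span {v : A | v.1 ∈ V} with hB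
  have hI : Ideal.span (V : Set (MvPolynomial (Fin 2) F)) = B.map (algebraMap A _) := by
    rw [hB, Ideal.map_span]
    congr 1
    ext v
    constructor
    · intro hv
      exact ⟨⟨v, Algebra.subset_adjoin hv⟩, hv, rfl⟩
    · rintro ⟨w, hw, rfl⟩
      exact hw
  have hIK : ∀ x ∈ Ideal.span (V : Set (MvPolynomial (Fin 2) F)) ^ k, x ∈ K := by
    intro x hx
    rw [hI, ← Ideal.map_pow] at hx
    have key : ∀ a, x * a ∈ K := by
      clear * - hx hk
      induction hx using Submodule.span_induction with
      | mem y hy =>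
        obtain ⟨j, hj, rfl⟩ := hy
        intro a
        exact hk j hj a
      | zero => intro a; rw [zero_mul]; exact K.zero_mem
      | add x y _ _ hx hy => intro a; rw [add_mul]; exact K.add_mem (hx a) (hy a)
      | smul c x _ hx => intro a; rw [smul_eq_mul, mul_comm c, mul_assoc]; exact hx _
    simpa using key 1
  refine ⟨N * k + 1, fun t ht => ?_⟩
  intro p hp
  have hle : N * k ≤ d * t + r - 1 := by
    have : 1 * t ≤ d * t := Nat.mul_le_mul_right t hd
    omega
  have hpK : p ∈ K := by
    apply hIK
    apply Ideal.pow_right_mono hN k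
    rw [← pow_mul]
    exact Ideal.pow_le_pow_right hle hp
  refine aux_mem_of_comp (A := MvPolynomial (Fin 2) F) _ p fun n => ?_
  by_cases hn : n < d * t + r - 1
  · rw [aux_comp_of_mem_pow hp hn]; exact Ideal.zero_mem _
  · exact aux_K hd hr1 V hVd p hpK t n (by omega)

theorem aux_r_pos {d r : ℕ} [IsAlgClosed F] (hd : 1 ≤ d) 
    (V : Submodule F (MvPolynomial (Fin 2) F))
    (hVd : V ≤ homogeneousSubmodule (Fin 2) F d) [Module.Finite F V]
    (hgcd : ∀ h : MvPolynomial (Fin 2) F, (∀ v ∈ V, h ∣ v) → IsUnit h)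
    (hr : ∀ V' : Submodule F (MvPolynomial (Fin 2) F), V' ≤ V →
        Module.finrank F V' + 1 = Module.finrank F V → ∀ g : MvPolynomial (Fin 2) F,
          IsGCDOf g (V' : Set (MvPolynomial (Fin 2) F)) → g.totalDegree ≤ r) : 1 ≤ r := by
  let a : Fin 2 → F := fun _ => 1
  have ha : a ≠ 0 := fun h => one_ne_zero (congrFun h 0)
  let ψ : V →ₗ[F] F := (aeval (R := F) a).toLinearMap.comp V.subtype
  obtain ⟨f, hf⟩ : ∃ f, ψ f ≠ 0 := by
    by_contra! hc
    exact aux_lin_not_unit a (hgcd _ fun v hv => aux_dvd_of_eval (hVd hv) a ha (hc ⟨v, hv⟩))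
  obtain ⟨V', hV'V, hrank, hV'0, hmem, hrelp⟩ := aux_codim hd V hVd hgcd ψ f hf
  have hfg : V'.FG := by
    have : Module.Finite F V' := Submodule.finiteDimensional_of_le hV'V
    exact Module.Finite.iff_fg.1 this
  obtain ⟨g, hg⟩ := aux_gcd_exists V' hfg
  obtain ⟨hg0, hghom, -⟩ := aux_gcd_primary V' (hV'V.trans hVd) hV'0 hg
  refine le_trans ?_ (hr V' hV'V hrank g hg)
  by_contra hlt
  have h0 : g.totalDegree = 0 := by omega
  rw [h0] at hghom
  refine aux_lin_not_unit a (isUnit_of_dvd_unit (hg.2 _ fun v hv => ?_) (aux_unit_of_deg_zero hghom hg0))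
  exact aux_dvd_of_eval (hVd (hV'V hv)) a ha ((hmem ⟨v, hV'V hv⟩).1 hv)

theorem aux_pow_pair (f g : MvPolynomial (Fin 2) F) (I : Ideal (MvPolynomial (Fin 2) F))
    (h : I ≤ Ideal.span {f, g}) (t : ℕ) : I ^ t ≤ Ideal.span {f ^ t, g} := by
  induction t with
  | zero =>
    rw [Ideal.eq_top_of_isUnit_mem (Ideal.span {f ^ 0, g}) (Ideal.subset_span (by simp : f ^ 0 ∈ _)) (by simp)]
    exact le_top
  | succ t ih =>
    rw [pow_succ, Ideal.mul_le]
    intro x hx y hy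
    obtain ⟨a, b, rfl⟩ := Ideal.mem_span_pair.1 (ih hx)
    obtain ⟨a', b', rfl⟩ := Ideal.mem_span_pair.1 (h hy)
    rw [Ideal.mem_span_pair]
    exact ⟨a * a', a * f ^ t * b' + b * (a' * f + b' * g), by ring⟩

end aux4

theorem stmt_1 {F : Type*} [Field F] [IsAlgClosed F] (d : ℕ) (hd : 1 ≤ d)
    (V : Submodule F (MvPolynomial (Fin 2) F))
    (hVd : V ≤ homogeneousSubmodule (Fin 2) F d)
    (hgcd : ∀ h : MvPolynomial (Fin 2) F, (∀ v ∈ V, h ∣ v) → IsUnit h)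
    (I : Ideal (MvPolynomial (Fin 2) F))
    (hI : I = Ideal.span (V : Set (MvPolynomial (Fin 2) F)))
    (r : ℕ)
    (hr : IsGreatest {ρ : ℕ | ∃ V' : Submodule F (MvPolynomial (Fin 2) F), V' ≤ V ∧
        Module.finrank F V' + 1 = Module.finrank F V ∧
        ∃ g : MvPolynomial (Fin 2) F,
          IsGCDOf g (V' : Set (MvPolynomial (Fin 2) F)) ∧ g.totalDegree = ρ} r) :
    ∃ t₀ : ℕ, ∀ t ≥ t₀,
      (Ideal.span (Set.range (X : Fin 2 → MvPolynomial (Fin 2) F)) ^ (d * t + r - 1) ≤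
          I ^ t) ∧
        ∃ p ∈ homogeneousSubmodule (Fin 2) F (d * t + r - 2), p ∉ I ^ t := by
  subst hI
  obtain ⟨⟨V', hV'V, hrank, g, hg, hgr⟩, hub⟩ := hr
  have hfinV : Module.Finite F V := Module.finite_of_finrank_pos (by omega)
  have hub' : ∀ V' : Submodule F (MvPolynomial (Fin 2) F), V' ≤ V →
        Module.finrank F V' + 1 = Module.finrank F V → ∀ g : MvPolynomial (Fin 2) F,
          IsGCDOf g (V' : Set (MvPolynomial (Fin 2) F)) → g.totalDegree ≤ r :=
    fun W h1 h2 g hg => hub ⟨W, h1, h2, g, hg, rfl⟩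
  have hr1 : 1 ≤ r := aux_r_pos hd V hVd hgcd hub'
  obtain ⟨t₀, ht₀⟩ := aux_upper hd hr1 V hVd hgcd hub'
  refine ⟨t₀ + 1, fun t ht => ⟨ht₀ t (by omega), ?_⟩⟩
  have hV'0 : V' ≠ ⊥ := by
    rintro rfl
    have : g = 0 := by
      apply zero_dvd_iff.1
      apply hg.2
      intro v hv
      rw [(Submodule.mem_bot F).1 hv]
    rw [this, totalDegree_zero] at hgr
    omega
  obtain ⟨hg0, hghom, -⟩ := aux_gcd_primary V' (hV'V.trans hVd) hV'0 hg
  rw [hgr] at hghom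
  obtain ⟨f, hfV, hfV'⟩ : ∃ f ∈ V, f ∉ V' := by
    by_contra! hc
    have : V' = V := le_antisymm hV'V hc
    rw [this] at hrank
    omega
  have hfinV' : Module.Finite F V' := Submodule.finiteDimensional_of_le hV'V
  have hsup : V' ⊔ Submodule.span F {f} = V := by
    have hle : V' ⊔ Submodule.span F {f} ≤ V :=
      sup_le hV'V ((Submodule.span_singleton_le_iff_mem _ _).2 hfV)
    apply Submodule.eq_of_le_of_finrank_le hle
    have hlt : V' < V' ⊔ Submodule.span F {f} := by
      refine lt_of_le_of_ne le_sup_left fun h => hfV' ?_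
      rw [h]
      exact Submodule.mem_sup_right (Submodule.mem_span_singleton_self f)
    have := Submodule.finrank_lt_finrank_of_lt hlt
    omega
  have hIle : Ideal.span (V : Set (MvPolynomial (Fin 2) F)) ≤ Ideal.span {f, g} := by
    rw [Ideal.span_le]
    intro v hv
    have hv : v ∈ V := hv
    rw [← hsup] at hv
    obtain ⟨w, hw, u, hu, rfl⟩ := Submodule.mem_sup.1 hv
    obtain ⟨c, rfl⟩ := Submodule.mem_span_singleton.1 hu
    obtain ⟨s, rfl⟩ := hg.1 w hw
    apply Ideal.mem_span_pair.2
    exact ⟨C c, s, by rw [smul_eq_C_mul]; ring⟩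
  have hdt : 1 ≤ d * t := Nat.mul_pos hd (by omega)
  obtain ⟨p, hp, hp'⟩ := aux_lower hdt hr1 (IsHomogeneous.pow (hVd hfV) t) hghom
  exact ⟨p, hp, fun hc => hp' (aux_pow_pair f g _ hIle t hc)⟩
end

section
/- Let S = F[x_0,…,x_n], let M be a finitely generated graded S-module generated in degree 0 which does not have finite length, and let I ⊆ S be a homogeneous ideal generated by forms of degree d such that M/IM has finite length. Write reg(M/I^tM) = dt + f_t − 1 and reg(I^tM) = dt + e_t. Then e_1 ≥ e_2 ≥ ⋯ ≥ 0, the sequence (e_t) is nonincreasing and nonnegative; moreover inf_t e_t = inf_t f_t =: e, and reg(I^tM) = dt + e for all sufficiently large t. -/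
open MvPolynomial

section KoszulRegularity

variable (F : Type*) [Field F] (N : ℕ)

/-- The Koszul differential (for the sequence `x_0, …, x_{N-1}` of variables) on
`M`-valued alternating chains, where a `p`-chain is recorded as a function on all
finite subsets of `Fin N` which vanishes on subsets of cardinality other than `p`. -/
noncomputable def koszulD {M : Type*} [AddCommGroup M]
    [Module (MvPolynomial (Fin N) F) M] (f : Finset (Fin N) → M) :
    Finset (Fin N) → M :=
  fun T => ∑ k ∈ Tᶜ, ((-1 : ℤ) ^ ((T.filter (fun j => j < k)).card)) •
    ((X k : MvPolynomial (Fin N) F) • f (insert k T))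

/-- `f` is a Koszul `p`-chain of internal degree `j` for the grading `𝓜`:
it is supported on `p`-element subsets `T`, with `f T` of degree `j - p`
(an element of `Λ^p(S^N) ⊗ M`, placed in internal degree `j`). -/
def IsKChain {M : Type*} [AddCommGroup M] [Module F M]
    (𝓜 : ℤ → Submodule F M) (p : ℕ) (j : ℤ) (f : Finset (Fin N) → M) : Prop :=
  ∀ T : Finset (Fin N), (T.card = p → f T ∈ 𝓜 (j - p)) ∧ (T.card ≠ p → f T = 0)

/-- The degree-`j` part of the `i`-th Koszul homology of `M` with respect to the variables
`x_0, …, x_{N-1}`, i.e. the degree-`j` part of `Tor_i^S(M, F)`, vanishes: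
every cycle is a boundary. -/
def torVanishes {M : Type*} [AddCommGroup M] [Module (MvPolynomial (Fin N) F) M]
    [Module F M] (𝓜 : ℤ → Submodule F M) (i : ℕ) (j : ℤ) : Prop :=
  ∀ f : Finset (Fin N) → M, IsKChain F N 𝓜 i j f → koszulD F N f = 0 →
    ∃ g : Finset (Fin N) → M, IsKChain F N 𝓜 (i + 1) j g ∧ koszulD F N g = f

/-- `r` is the Castelnuovo-Mumford regularity of the graded module `M` over
`S = F[x_0, …, x_{N-1}]`: the maximum over `i` of `t_i(M) - i`, where `t_i(M)` is the
largest degree occurring in `Tor_i^S(M, F)` (computed as Koszul homology, recording the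
degrees of the `i`-th minimal syzygies of `M`). -/
def IsRegularity {M : Type*} [AddCommGroup M] [Module (MvPolynomial (Fin N) F) M]
    [Module F M] (𝓜 : ℤ → Submodule F M) (ρ : ℤ) : Prop :=
  (∀ (i : ℕ) (j : ℤ), ¬ torVanishes F N 𝓜 i j → j - i ≤ ρ) ∧
  (∃ (i : ℕ) (j : ℤ), ¬ torVanishes F N 𝓜 i j ∧ j - i = ρ)

end KoszulRegularity


theorem aux_socle {F : Type*} [Field F] (N : ℕ) {L : Type*} [AddCommGroup L]
    [Module (MvPolynomial (Fin N) F) L] [Module F L] (𝓛 : ℤ → Submodule F L) (b : ℤ)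
    (h : torVanishes F N 𝓛 N (b + N)) (q : L) (hq : q ∈ 𝓛 b)
    (hk : ∀ k : Fin N, (X k : MvPolynomial (Fin N) F) • q = 0) : q = 0 := by
  obtain ⟨g, hg, hgf⟩ := h (fun T => if T = Finset.univ then q else 0) (by
    intro T
    constructor
    · intro hT
      have : T = Finset.univ := by
        apply Finset.eq_univ_of_card
        simpa using hT
      simpa [this] using hq
    · intro hT
      have : T ≠ Finset.univ := by
        rintro rfl
        simp at hT
      simp [this]) (by
    funext T
    simp only [koszulD, Pi.zero_apply]
    apply Finset.sum_eq_zero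
    intro k _
    split_ifs
    · rw [hk, smul_zero]
    · simp)
  have := congrFun hgf Finset.univ
  simpa [koszulD] using this.symm

theorem aux_top {F : Type*} [Field F] (n : ℕ) {L : Type*} [AddCommGroup L]
    [Module (MvPolynomial (Fin (n + 1)) F) L] [Module F L] (𝓛 : ℤ → Submodule F L) (a : ℤ)
    (h : torVanishes F (n + 1) 𝓛 n (a + 1 + n)) (y : Fin (n + 1) → L)
    (hy : ∀ k, y k ∈ 𝓛 (a + 1))
    (hyy : ∀ i j, (X i : MvPolynomial (Fin (n + 1)) F) • y j =
      (X j : MvPolynomial (Fin (n + 1)) F) • y i) :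
    ∃ z ∈ 𝓛 a, ∀ k, (X k : MvPolynomial (Fin (n + 1)) F) • z = y k := by
  obtain ⟨g, hg, hgf⟩ := h (fun T => if T.card = n then
      ∑ k ∈ Tᶜ, ((-1 : ℤ) ^ (k : ℕ)) • y k else 0) (by
    intro T
    constructor
    · intro hT
      simp only [hT, if_true]
      apply Submodule.sum_mem
      intro k _
      have h2 : a + 1 + (n : ℤ) - n = a + 1 := by ring
      rw [h2]
      exact zsmul_mem (hy k) _
    · intro hT
      simp [hT]) (by
    funext T
    simp only [koszulD, Pi.zero_apply]
    by_cases hT : T.card + 1 = n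
    · have hc : Tᶜ.card = 2 := by
        rw [Finset.card_compl, Fintype.card_fin]
        omega
      obtain ⟨k, l, hkl, hTc⟩ : ∃ k l, k < l ∧ Tᶜ = {k, l} := by
        obtain ⟨k, l, hne, h2⟩ := Finset.card_eq_two.mp hc
        rcases lt_or_gt_of_ne hne with h3 | h3
        · exact ⟨k, l, h3, h2⟩
        · exact ⟨l, k, h3, by rw [h2, Finset.pair_comm]⟩
      have hmem : ∀ x, x ∈ T ↔ x ≠ k ∧ x ≠ l := by
        intro x
        have : x ∈ Tᶜ ↔ x = k ∨ x = l := by rw [hTc]; simp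
        rw [Finset.mem_compl] at this
        tauto
      have hkT : k ∉ T := by simp [hmem]
      have hlT : l ∉ T := by simp [hmem]
      have e1 : (insert k T)ᶜ = {l} := by
        ext x
        simp only [Finset.mem_compl, Finset.mem_insert, hmem, Finset.mem_singleton]
        have := hkl.ne
        by_cases hx : x = l
        · subst hx; simp [this.symm]
        · simp [hx]
      have e2 : (insert l T)ᶜ = {k} := by
        ext x
        simp only [Finset.mem_compl, Finset.mem_insert, hmem, Finset.mem_singleton]
        have := hkl.ne
        by_cases hx : x = k
        · subst hx; simp [this]
        · simp [hx]
      have c1 : (T.filter (fun j => j < k)).card = (k : ℕ) := by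
        have : T.filter (fun j => j < k) = Finset.Iio k := by
          ext x
          simp only [Finset.mem_filter, hmem, Finset.mem_Iio]
          constructor
          · tauto
          · intro hx
            exact ⟨⟨hx.ne, (hx.trans hkl).ne⟩, hx⟩
        rw [this, Fin.card_Iio]
      have c2 : (T.filter (fun j => j < l)).card + 1 = (l : ℕ) := by
        have : T.filter (fun j => j < l) = (Finset.Iio l).erase k := by
          ext x
          simp only [Finset.mem_filter, hmem, Finset.mem_Iio, Finset.mem_erase]
          constructor
          · tauto
          · intro hx
            exact ⟨⟨hx.1, hx.2.ne⟩, hx.2⟩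
        rw [this, Finset.card_erase_add_one (by simpa using hkl), Fin.card_Iio]
      rw [hTc, Finset.sum_pair hkl.ne, c1]
      simp only [Finset.card_insert_of_notMem hkT, Finset.card_insert_of_notMem hlT, hT, if_true,
        e1, e2, Finset.sum_singleton]
      rw [← c2, smul_comm (X k : MvPolynomial (Fin (n + 1)) F),
        smul_comm (X l : MvPolynomial (Fin (n + 1)) F), smul_smul, smul_smul, hyy l k,
        ← add_smul]
      convert zero_smul ℤ _
      ring
    · apply Finset.sum_eq_zero
      intro k hk
      rw [Finset.mem_compl] at hk
      rw [Finset.card_insert_of_notMem hk, if_neg hT]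
      simp)
  refine ⟨g Finset.univ, ?_, ?_⟩
  · have := (hg Finset.univ).1 (by simp)
    have h2 : a + 1 + (n : ℤ) - ((n + 1 : ℕ) : ℤ) = a := by push_cast; ring
    rwa [h2] at this
  · intro k
    have := congrFun hgf ({k}ᶜ)
    have hc : (({k} : Finset (Fin (n + 1)))ᶜ).card = n := by
      rw [Finset.card_compl]; simp
    have e : insert k ({k} : Finset (Fin (n + 1)))ᶜ = Finset.univ := by
      ext x; simp
    have c1 : ((({k} : Finset (Fin (n + 1)))ᶜ).filter (fun j => j < k)).card = (k : ℕ) := by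
      have : (({k} : Finset (Fin (n + 1)))ᶜ).filter (fun j => j < k) = Finset.Iio k := by
        ext x
        simp only [Finset.mem_filter, Finset.mem_compl, Finset.mem_singleton, Finset.mem_Iio]
        exact ⟨fun h => h.2, fun h => ⟨h.ne, h⟩⟩
      rw [this, Fin.card_Iio]
    simp only [koszulD, hc, if_true, compl_compl, Finset.sum_singleton, c1, e] at this
    have h3 := congrArg (fun v => ((-1 : ℤ) ^ (k : ℕ)) • v) this
    simp only [smul_smul, ← pow_add, ← two_mul] at h3
    simpa [pow_mul] using h3

/-- Homogeneous projections of an internally graded module. -/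
theorem aux_proj {F M : Type*} [Field F] [AddCommGroup M] [Module F M]
    (𝓜 : ℤ → Submodule F M) (hdecomp : DirectSum.IsInternal 𝓜) :
    ∃ π : ℤ → M →ₗ[F] M, (∀ b x, π b x ∈ 𝓜 b) ∧ (∀ b x, x ∈ 𝓜 b → π b x = x) ∧
      (∀ a b x, x ∈ 𝓜 a → a ≠ b → π b x = 0) ∧
      (∀ x, ∃ s : Finset ℤ, x = ∑ b ∈ s, π b x ∧ ∀ b, b ∉ s → π b x = 0) := by
  classical
  let _ := hdecomp.chooseDecomposition
  refine ⟨fun b => (𝓜 b).subtype ∘ₗ DirectSum.component F ℤ (fun i => 𝓜 i) b ∘ₗ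
    (DirectSum.decomposeLinearEquiv 𝓜).toLinearMap, ?_, ?_, ?_, ?_⟩
  · intro b x
    simp
  · intro b x hx
    exact DirectSum.decompose_of_mem_same 𝓜 hx
  · intro a b x hx hab
    exact DirectSum.decompose_of_mem_ne 𝓜 hx hab
  · intro x
    refine ⟨(DirectSum.decompose 𝓜 x).support, (DirectSum.sum_support_decompose 𝓜 x).symm, ?_⟩
    intro b hb
    have : DirectSum.decompose 𝓜 x b = 0 := by simpa using hb
    change ((DirectSum.decompose 𝓜 x b : 𝓜 b) : M) = 0
    rw [this]; rfl

theorem aux_proj_smul {F M : Type*} [Field F] (N : ℕ) [AddCommGroup M] [Module F M]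
    [Module (MvPolynomial (Fin N) F) M] (𝓜 : ℤ → Submodule F M)
    (hgr : ∀ (i : ℕ) (j : ℤ) (p : MvPolynomial (Fin N) F) (x : M),
      p ∈ homogeneousSubmodule (Fin N) F i → x ∈ 𝓜 j → p • x ∈ 𝓜 (i + j))
    (π : ℤ → M →ₗ[F] M) (h1 : ∀ b x, π b x ∈ 𝓜 b) (h2 : ∀ b x, x ∈ 𝓜 b → π b x = x)
    (h3 : ∀ a b x, x ∈ 𝓜 a → a ≠ b → π b x = 0)
    (h4 : ∀ x, ∃ s : Finset ℤ, x = ∑ b ∈ s, π b x ∧ ∀ b, b ∉ s → π b x = 0)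
    (i : ℕ) (p : MvPolynomial (Fin N) F) (hp : p ∈ homogeneousSubmodule (Fin N) F i)
    (b : ℤ) (x : M) : π b (p • x) = p • π (b - i) x := by
  obtain ⟨s, hs, hs0⟩ := h4 x
  have e : p • x = ∑ a ∈ s, p • π a x := by
    conv_lhs => rw [hs]
    rw [Finset.smul_sum]
  rw [e, map_sum]
  by_cases hb : b - i ∈ s
  · rw [Finset.sum_eq_single_of_mem _ hb]
    · apply h2
      have := hgr i (b - i) p _ hp (h1 (b - i) x)
      simpa using this
    · intro a _ hab
      apply h3 (i + a)
      · exact hgr i a p _ hp (h1 a x)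
      · omega
  · rw [hs0 _ hb, smul_zero]
    apply Finset.sum_eq_zero
    intro a ha
    apply h3 (i + a)
    · exact hgr i a p _ hp (h1 a x)
    · rintro rfl
      apply hb
      simpa using ha

theorem aux_step {F M : Type*} [Field F] (N : ℕ) [AddCommGroup M] [Module F M]
    [Module (MvPolynomial (Fin N) F) M] (π : ℤ → M →ₗ[F] M) (𝓜 : ℤ → Submodule F M)
    (h1 : ∀ b x, π b x ∈ 𝓜 b) (d : ℕ) (G : Set (MvPolynomial (Fin N) F))
    (hG : ∀ g ∈ G, ∀ (b : ℤ) (x : M), π b (g • x) = g • π (b - d) x)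
    (K P : Submodule (MvPolynomial (Fin N) F) M) (hK : ∀ x ∈ K, ∀ b, π b x ∈ K) (b : ℤ)
    (hP : ∀ u ∈ K, u ∈ 𝓜 (b - d) → ∀ g ∈ G, g • u ∈ P) :
    ∀ w ∈ Ideal.span G • K, π b w ∈ P := by
  intro w hw
  refine Submodule.smul_induction_on hw ?_ ?_
  · intro r hr
    refine Submodule.span_induction (p := fun r _ => ∀ m ∈ K, π b (r • m) ∈ P) ?_ ?_ ?_ ?_ hr
    · intro g hg m hm
      rw [hG g hg]
      exact hP _ (hK m hm _) (h1 _ _) g hg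
    · intro m _
      simp
    · intro x y _ _ hx hy m hm
      rw [add_smul, map_add]
      exact P.add_mem (hx m hm) (hy m hm)
    · intro a x _ hx m hm
      rw [smul_eq_mul, mul_comm, mul_smul]
      exact hx _ (K.smul_mem a hm)
  · intro x y hx hy
    rw [map_add]
    exact P.add_mem hx hy

/-- Elements killed by all words of length `m` in the variables. -/
noncomputable def auxTors (F : Type*) [Field F] (N : ℕ) (M : Type*) [AddCommGroup M]
    [Module (MvPolynomial (Fin N) F) M] : ℕ → Submodule (MvPolynomial (Fin N) F) M
  | 0 => ⊥
  | m + 1 => ⨅ k : Fin N, (auxTors F N M m).comap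
      (LinearMap.lsmul (MvPolynomial (Fin N) F) M (X k))

theorem auxTors_succ {F : Type*} [Field F] {N : ℕ} {M : Type*} [AddCommGroup M]
    [Module (MvPolynomial (Fin N) F) M] (m : ℕ) (x : M) :
    x ∈ auxTors F N M (m + 1) ↔
      ∀ k : Fin N, (X k : MvPolynomial (Fin N) F) • x ∈ auxTors F N M m := by
  simp [auxTors, Submodule.mem_iInf]

theorem aux_X {F M : Type*} [Field F] (N : ℕ) [AddCommGroup M] [Module F M]
    [Module (MvPolynomial (Fin N) F) M] (𝓜 : ℤ → Submodule F M)
    (hgr : ∀ (i : ℕ) (j : ℤ) (p : MvPolynomial (Fin N) F) (x : M),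
      p ∈ homogeneousSubmodule (Fin N) F i → x ∈ 𝓜 j → p • x ∈ 𝓜 (i + j))
    (k : Fin N) (a : ℤ) (x : M) (hx : x ∈ 𝓜 a) :
    (X k : MvPolynomial (Fin N) F) • x ∈ 𝓜 (a + 1) := by
  have := hgr 1 a (X k) x (isHomogeneous_X F k) hx
  rwa [Nat.cast_one, add_comm] at this

/-- No torsion above the regularity. -/
theorem aux_notors {F M : Type*} [Field F] (N : ℕ) [AddCommGroup M] [Module F M]
    [Module (MvPolynomial (Fin N) F) M] (𝓛 : ℤ → Submodule F M)
    (hX : ∀ (k : Fin N) (a : ℤ) (x : M), x ∈ 𝓛 a →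
      (X k : MvPolynomial (Fin N) F) • x ∈ 𝓛 (a + 1))
    (ρ : ℤ) (hρ : ∀ (i : ℕ) (j : ℤ), ρ < j - i → torVanishes F N 𝓛 i j) (m : ℕ) :
    ∀ (b : ℤ), ρ < b → ∀ x ∈ 𝓛 b, x ∈ auxTors F N M m → x = 0 := by
  induction m with
  | zero => intro b _ x _ hx; simpa [auxTors] using hx
  | succ m ih =>
    intro b hb x hx hxt
    rw [auxTors_succ] at hxt
    refine aux_socle N 𝓛 b (hρ _ _ (by omega)) x hx ?_
    intro k
    exact ih (b + 1) (by omega) _ (hX k b x hx) (hxt k)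

/-- Above the regularity of `K`, every element of `M` agrees with one of `K` up to torsion. -/
theorem aux_lift {F M : Type*} [Field F] (n : ℕ) [AddCommGroup M] [Module F M]
    [Module (MvPolynomial (Fin (n + 1)) F) M] (𝓜 𝓛 : ℤ → Submodule F M)
    (hXM : ∀ (k : Fin (n + 1)) (a : ℤ) (x : M), x ∈ 𝓜 a →
      (X k : MvPolynomial (Fin (n + 1)) F) • x ∈ 𝓜 (a + 1))
    (hX : ∀ (k : Fin (n + 1)) (a : ℤ) (x : M), x ∈ 𝓛 a →
      (X k : MvPolynomial (Fin (n + 1)) F) • x ∈ 𝓛 (a + 1))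
    (ρ : ℤ) (hρ : ∀ (i : ℕ) (j : ℤ), ρ < j - i → torVanishes F (n + 1) 𝓛 i j)
    (A : ℤ) (hA : ∀ a, A ≤ a → ∀ x ∈ 𝓜 a, x ∈ 𝓛 a) (m : ℕ) :
    ∀ a : ℤ, ρ ≤ a → A - m ≤ a → ∀ x ∈ 𝓜 a, ∃ y ∈ 𝓛 a, x - y ∈ auxTors F (n + 1) M m := by
  induction m with
  | zero =>
    intro a _ ha x hx
    exact ⟨x, hA a (by simpa using ha) x hx, by simp⟩
  | succ m ih =>
    intro a hρa ha x hx
    have H := fun k => ih (a + 1) (by omega) (by push_cast at ha; omega) _ (hXM k a x hx)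
    choose y hy hyt using H
    obtain ⟨z, hz, hzk⟩ := aux_top n 𝓛 a (hρ _ _ (by omega)) y hy (by
      intro i j
      rw [← sub_eq_zero]
      refine aux_notors (n + 1) 𝓛 hX ρ hρ m (a + 1 + 1) (by omega) _
        (Submodule.sub_mem _ (hX _ _ _ (hy j)) (hX _ _ _ (hy i))) ?_
      have e : (X i : MvPolynomial (Fin (n + 1)) F) • y j -
          (X j : MvPolynomial (Fin (n + 1)) F) • y i =
          (X j : MvPolynomial (Fin (n + 1)) F) •
            ((X i : MvPolynomial (Fin (n + 1)) F) • x - y i) -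
          (X i : MvPolynomial (Fin (n + 1)) F) •
            ((X j : MvPolynomial (Fin (n + 1)) F) • x - y j) := by
        rw [smul_sub, smul_sub, smul_comm (X i : MvPolynomial (Fin (n + 1)) F)
          (X j : MvPolynomial (Fin (n + 1)) F) x]
        abel
      rw [e]
      exact Submodule.sub_mem _ (Submodule.smul_mem _ _ (hyt i)) (Submodule.smul_mem _ _ (hyt j)))
    refine ⟨z, hz, ?_⟩
    rw [auxTors_succ]
    intro k
    rw [smul_sub, hzk]
    exact hyt k

/-- Comparing Koszul homology of `𝓛 ≤ 𝓜` which agree in one relevant degree. -/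
theorem aux_sub {F M : Type*} [Field F] (N : ℕ) [AddCommGroup M] [Module F M]
    [Module (MvPolynomial (Fin N) F) M] (𝓜 𝓛 : ℤ → Submodule F M) (hle : ∀ j, 𝓛 j ≤ 𝓜 j)
    (i : ℕ) (j : ℤ) (h : torVanishes F N 𝓜 i j) (hd : 𝓜 (j - i - 1) ≤ 𝓛 (j - i - 1)) :
    torVanishes F N 𝓛 i j := by
  intro f hf hf0
  obtain ⟨g, hg, hgf⟩ := h f (fun T => ⟨fun hT => hle _ ((hf T).1 hT), (hf T).2⟩) hf0
  refine ⟨g, fun T => ⟨fun hT => ?_, (hg T).2⟩, hgf⟩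
  have := (hg T).1 hT
  have e : j - ((i + 1 : ℕ) : ℤ) = j - i - 1 := by push_cast; ring
  rw [e] at this ⊢
  exact hd this

theorem aux_sup {F M : Type*} [Field F] (N : ℕ) [AddCommGroup M] [Module F M]
    [Module (MvPolynomial (Fin N) F) M] (𝓜 𝓛 : ℤ → Submodule F M) (hle : ∀ j, 𝓛 j ≤ 𝓜 j)
    (i : ℕ) (j : ℤ) (h : torVanishes F N 𝓛 i j) (hd : 𝓜 (j - i) ≤ 𝓛 (j - i)) :
    torVanishes F N 𝓜 i j := by
  intro f hf hf0
  obtain ⟨g, hg, hgf⟩ := h f (fun T => ⟨fun hT => hd ((hf T).1 hT), (hf T).2⟩) hf0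
  exact ⟨g, fun T => ⟨fun hT => hle _ ((hg T).1 hT), (hg T).2⟩, hgf⟩

theorem aux_zero {F M : Type*} [Field F] (N : ℕ) [AddCommGroup M] [Module F M]
    [Module (MvPolynomial (Fin N) F) M] (𝓛 : ℤ → Submodule F M)
    (i : ℕ) (j : ℤ) (h : 𝓛 (j - i) = ⊥) : torVanishes F N 𝓛 i j := by
  intro f hf _
  refine ⟨0, fun T => ⟨fun _ => Submodule.zero_mem _, fun _ => rfl⟩, ?_⟩
  funext T
  have : f T = 0 := by
    by_cases hT : T.card = i
    · have := (hf T).1 hT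
      rw [h] at this
      simpa using this
    · exact (hf T).2 hT
  rw [this]
  simp [koszulD]

theorem aux_tor0 {F M : Type*} [Field F] (N : ℕ) [AddCommGroup M] [Module F M]
    [Module (MvPolynomial (Fin N) F) M] (𝓛 : ℤ → Submodule F M)
    (b : ℤ) (h : torVanishes F N 𝓛 0 b) (h0 : 𝓛 (b - 1) = ⊥) : 𝓛 b = ⊥ := by
  rw [eq_bot_iff]
  intro w hw
  obtain ⟨g, hg, hgf⟩ := h (fun T => if T = ∅ then w else 0) (by
    intro T
    constructor
    · intro hT
      rw [Finset.card_eq_zero] at hT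
      simpa [hT] using hw
    · intro hT
      have : T ≠ ∅ := by
        rintro rfl
        simp at hT
      simp [this]) (by
    funext T
    simp [koszulD])
  have := congrFun hgf ∅
  simp only [koszulD, if_true] at this
  rw [Submodule.mem_bot, ← this]
  apply Finset.sum_eq_zero
  intro k _
  have h2 := (hg (insert k ∅)).1 (by simp)
  have e : b - ((0 + 1 : ℕ) : ℤ) = b - 1 := by simp
  rw [e, h0, Submodule.mem_bot] at h2
  rw [h2]
  simp

/-- The regularity of a graded module vanishing in large degrees is its top degree. -/
theorem aux_fl {F M : Type*} [Field F] (N : ℕ) [AddCommGroup M] [Module F M]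
    [Module (MvPolynomial (Fin N) F) M] (𝓛 : ℤ → Submodule F M)
    (hX : ∀ (k : Fin N) (a : ℤ) (x : M), x ∈ 𝓛 a →
      (X k : MvPolynomial (Fin N) F) • x ∈ 𝓛 (a + 1))
    (A : ℤ) (hA : ∀ a, A ≤ a → 𝓛 a = ⊥) (ρ : ℤ) (hρ : IsRegularity F N 𝓛 ρ) :
    𝓛 ρ ≠ ⊥ ∧ ∀ a, ρ < a → 𝓛 a = ⊥ := by
  constructor
  · intro h0
    obtain ⟨i, j, h1, h2⟩ := hρ.2
    exact h1 (aux_zero N 𝓛 i j (by rw [h2, h0]))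
  · have key : ∀ m : ℕ, ∀ a, ρ < a → A - m ≤ a → 𝓛 a = ⊥ := by
      intro m
      induction m with
      | zero => intro a _ h; exact hA a (by simpa using h)
      | succ m ih =>
        intro a ha h
        rw [eq_bot_iff]
        intro q hq
        rw [Submodule.mem_bot]
        have hv : torVanishes F N 𝓛 N (a + N) := by
          by_contra hc
          have := hρ.1 _ _ hc
          omega
        refine aux_socle N 𝓛 a hv q hq ?_
        intro k
        have h2 := hX k a q hq
        rw [ih (a + 1) (by omega) (by push_cast at h; omega)] at h2
        simpa using h2
    intro a ha
    exact key (A - a).toNat a ha (by omega)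

theorem aux_fin {F M : Type*} [Field F] (N : ℕ) [AddCommGroup M] [Module F M]
    [Module (MvPolynomial (Fin N) F) M] [IsScalarTower F (MvPolynomial (Fin N) F) M]
    [Module.Finite (MvPolynomial (Fin N) F) M] (K : ℕ)
    (hK : ∀ (m : Fin N →₀ ℕ) (x : M), K < m.degree →
      (monomial m 1 : MvPolynomial (Fin N) F) • x = 0) : Module.Finite F M := by
  obtain ⟨B, hB⟩ := (Module.Finite.fg_top : (⊤ : Submodule (MvPolynomial (Fin N) F) M).FG)
  let T : Set M := Set.image2 (fun m b => (monomial m 1 : MvPolynomial (Fin N) F) • b)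
    {m : Fin N →₀ ℕ | m.degree ≤ K} (B : Set M)
  have hT : T.Finite := (Finsupp.finite_of_degree_le K).image2 _ B.finite_toSet
  have hspan : Submodule.span F T = ⊤ := by
    rw [eq_top_iff]
    intro x _
    have hx : x ∈ Submodule.span (MvPolynomial (Fin N) F) (B : Set M) := by rw [hB]; trivial
    have key : ∀ p : MvPolynomial (Fin N) F, p • x ∈ Submodule.span F T := by
      refine Submodule.span_induction (p := fun x _ =>
        ∀ p : MvPolynomial (Fin N) F, p • x ∈ Submodule.span F T) ?_ ?_ ?_ ?_ hx
      · intro b hb p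
        rw [p.as_sum, Finset.sum_smul]
        apply Submodule.sum_mem
        intro m _
        have e : (monomial m (coeff m p) : MvPolynomial (Fin N) F) =
            (coeff m p) • (monomial m 1 : MvPolynomial (Fin N) F) := by
          rw [smul_monomial, smul_eq_mul, mul_one]
        rw [e, smul_assoc]
        apply Submodule.smul_mem
        by_cases hm : m.degree ≤ K
        · exact Submodule.subset_span ⟨m, hm, b, hb, rfl⟩
        · rw [hK m b (by omega)]
          exact Submodule.zero_mem _
      · intro p
        simp
      · intro x y _ _ hx hy p
        rw [smul_add]
        exact Submodule.add_mem _ (hx p) (hy p)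
      · intro a x _ hx p
        rw [← mul_smul]
        exact hx _
    simpa using key 1
  exact Module.finite_def.mpr ⟨hT.toFinset, by simpa using hspan⟩

/-!
STATEMENT 3: Let `S = F[x_0, …, x_n]`, let `M` be a finitely generated graded `S`-module
generated in degree `0` which does not have finite length, and let `I ⊆ S` be a homogeneous
ideal generated by forms of degree `d` such that `M/IM` has finite length.  Write
`reg (M/I^tM) = d*t + f_t - 1` and `reg (I^tM) = d*t + e_t`.  Then `e_1 ≥ e_2 ≥ ⋯ ≥ 0`,
i.e. the sequence `(e_t)` is nonincreasing and nonnegative; moreover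
`inf_t e_t = inf_t f_t =: e`, and `reg (I^tM) = d*t + e` for all sufficiently large `t`.

The regularity of the graded submodule `I^tM ⊆ M` is expressed via `IsRegularity` applied to
the grading `j ↦ (I^tM) ∩ 𝓜 j`, and that of `M/I^tM` via the image grading on the quotient.
-/
theorem stmt_3 {F : Type*} [Field F] (n : ℕ) (d : ℕ)
    (M : Type*) [AddCommGroup M] [Module (MvPolynomial (Fin (n + 1)) F) M]
    [Module F M] [IsScalarTower F (MvPolynomial (Fin (n + 1)) F) M]
    [Module.Finite (MvPolynomial (Fin (n + 1)) F) M]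
    -- the grading on M
    (𝓜 : ℤ → Submodule F M)
    (hdecomp : DirectSum.IsInternal 𝓜)
    (hgradedsmul : ∀ (i : ℕ) (j : ℤ) (p : MvPolynomial (Fin (n + 1)) F) (x : M),
      p ∈ homogeneousSubmodule (Fin (n + 1)) F i → x ∈ 𝓜 j → p • x ∈ 𝓜 (i + j))
    -- M is generated in degree 0 and does not have finite length
    (hgen0 : Submodule.span (MvPolynomial (Fin (n + 1)) F) (𝓜 0 : Set M) = ⊤)
    (hinf : ¬ Module.Finite F M)
    -- I is generated by forms of degree d, and M/IM has finite length
    (I : Ideal (MvPolynomial (Fin (n + 1)) F))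
    (G : Set (MvPolynomial (Fin (n + 1)) F))
    (hG : ∀ g ∈ G, g ∈ homogeneousSubmodule (Fin (n + 1)) F d)
    (hIG : I = Ideal.span G)
    (hfl : Module.Finite F
      (M ⧸ (I • ⊤ : Submodule (MvPolynomial (Fin (n + 1)) F) M)))
    -- reg (M/I^tM) = d*t + f_t - 1 and reg (I^tM) = d*t + e_t for t ≥ 1
    (f e : ℕ → ℤ)
    (hf : ∀ t : ℕ, 1 ≤ t →
      IsRegularity F (n + 1)
        (fun j => (𝓜 j).map
          ((I ^ t • (⊤ : Submodule (MvPolynomial (Fin (n + 1)) F) M)).mkQ.restrictScalars F))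
        (d * t + f t - 1))
    (he : ∀ t : ℕ, 1 ≤ t →
      IsRegularity F (n + 1)
        (fun j =>
          (I ^ t • (⊤ : Submodule (MvPolynomial (Fin (n + 1)) F) M)).restrictScalars F ⊓ 𝓜 j)
        (d * t + e t)) :
    (∀ t : ℕ, 1 ≤ t → 0 ≤ e t ∧ e (t + 1) ≤ e t) ∧
    ∃ c : ℤ,
      IsGLB {z : ℤ | ∃ t : ℕ, 1 ≤ t ∧ z = e t} c ∧
      IsGLB {z : ℤ | ∃ t : ℕ, 1 ≤ t ∧ z = f t} c ∧
      ∃ t₀ : ℕ, ∀ t ≥ t₀, e t = c := by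
  obtain ⟨π, h1, h2, h3, h4⟩ := aux_proj 𝓜 hdecomp
  have hπs := aux_proj_smul (n + 1) 𝓜 hgradedsmul π h1 h2 h3 h4
  have hXM := aux_X (n + 1) 𝓜 hgradedsmul
  have hπG : ∀ g ∈ G, ∀ (b : ℤ) (x : M), π b (g • x) = g • π (b - d) x :=
    fun g hg b x => hπs d g (hG g hg) b x
  have hzero : ∀ x : M, (∀ b, π b x = 0) → x = 0 := by
    intro x hx
    obtain ⟨s, hs, _⟩ := h4 x
    rw [hs]
    exact Finset.sum_eq_zero fun b _ => hx b
  -- the submodules `I^t M`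
  let Nt : ℕ → Submodule (MvPolynomial (Fin (n + 1)) F) M := fun t => I ^ t • ⊤
  have hN0 : Nt 0 = ⊤ := by simp [Nt]
  have hNs : ∀ t, Nt (t + 1) = I • Nt t := by
    intro t
    simp only [Nt]
    rw [pow_succ', Submodule.mul_smul]
  have hNle : ∀ t, Nt (t + 1) ≤ Nt t := by
    intro t
    rw [hNs]
    exact Submodule.smul_le_right
  have hgN : ∀ t, ∀ g ∈ G, ∀ u ∈ Nt t, g • u ∈ Nt (t + 1) := by
    intro t g hg u hu
    rw [hNs]
    exact Submodule.smul_mem_smul (by rw [hIG]; exact Ideal.subset_span hg) hu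
  have hNhom : ∀ t, ∀ x ∈ Nt t, ∀ b, π b x ∈ Nt t := by
    intro t
    induction t with
    | zero => intro x _ b; rw [hN0]; trivial
    | succ t ih =>
      intro x hx b
      rw [hNs, hIG] at hx
      exact aux_step (n + 1) π 𝓜 h1 d G hπG (Nt t) (Nt (t + 1)) ih b
        (fun u hu _ g hg => hgN t g hg u hu) x hx
  have hstep : ∀ (t : ℕ) (b : ℤ) (P : Submodule (MvPolynomial (Fin (n + 1)) F) M),
      (∀ u ∈ Nt t, u ∈ 𝓜 (b - d) → ∀ g ∈ G, g • u ∈ P) →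
      ∀ w ∈ Nt (t + 1), w ∈ 𝓜 b → w ∈ P := by
    intro t b P hP w hw hwb
    rw [hNs, hIG] at hw
    have := aux_step (n + 1) π 𝓜 h1 d G hπG (Nt t) P (hNhom t) b hP w hw
    rwa [h2 b w hwb] at this
  -- `M` lives in nonnegative degrees
  have hnegπ : ∀ x : M, ∀ b : ℤ, b < 0 → π b x = 0 := by
    intro x
    have hx : x ∈ Submodule.span (MvPolynomial (Fin (n + 1)) F) (𝓜 0 : Set M) := by
      rw [hgen0]; trivial
    refine Submodule.span_induction (p := fun x _ => ∀ b : ℤ, b < 0 → π b x = 0) ?_ ?_ ?_ ?_ hx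
    · intro y hy b hb
      exact h3 0 b y hy (by omega)
    · intro b _
      simp
    · intro y z _ _ hy hz b hb
      rw [map_add, hy b hb, hz b hb, add_zero]
    · intro p y _ hy b hb
      rw [← sum_homogeneousComponent p, Finset.sum_smul, map_sum]
      apply Finset.sum_eq_zero
      intro i _
      rw [hπs i _ (homogeneousComponent_isHomogeneous i p), hy _ (by omega), smul_zero]
  have hneg : ∀ b : ℤ, b < 0 → ∀ x ∈ 𝓜 b, x = 0 := by
    intro b hb x hx
    rw [← h2 b x hx]
    exact hnegπ x b hb
  have hNneg : ∀ (t : ℕ) (b : ℤ), b < d * t → ∀ x ∈ Nt t, x ∈ 𝓜 b → x = 0 := by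
    intro t
    induction t with
    | zero => intro b hb x _ hx; exact hneg b (by simpa using hb) x hx
    | succ t ih =>
      intro b hb x hx hxb
      have := hstep t b ⊥ (by
        intro u hu hub g _
        rw [ih (b - d) (by push_cast at hb; linarith) u hu hub, smul_zero]
        exact Submodule.zero_mem _) x hx hxb
      simpa using this
  -- `M / I^t M` vanishes in large degrees
  have hlarge1 : ∃ J : ℤ, ∀ j, J ≤ j → ∀ x ∈ 𝓜 j, x ∈ Nt 1 := by
    have e1 : Nt 1 = I • ⊤ := by simp [Nt]
    obtain ⟨B, hB⟩ := hfl.fg_top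
    have hbd : ∀ q : M ⧸ (I • ⊤ : Submodule (MvPolynomial (Fin (n + 1)) F) M),
        ∃ J : ℤ, ∀ j, J ≤ j → ∀ m : M,
          (I • ⊤ : Submodule (MvPolynomial (Fin (n + 1)) F) M).mkQ m = q → π j m ∈ Nt 1 := by
      intro q
      have hq : q ∈ Submodule.span F (B : Set
        (M ⧸ (I • ⊤ : Submodule (MvPolynomial (Fin (n + 1)) F) M))) := by rw [hB]; trivial
      obtain ⟨m0, rfl⟩ := Submodule.mkQ_surjective _ q
      obtain ⟨s, _, hs⟩ := h4 m0
      obtain ⟨J, hJ⟩ := s.bddAbove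
      refine ⟨J + 1, fun j hj m hm => ?_⟩
      have hz : π j m0 = 0 := hs j (fun hjs => by have := hJ hjs; omega)
      have hd : m - m0 ∈ Nt 1 := by
        rw [e1, ← Submodule.ker_mkQ (I • ⊤ : Submodule (MvPolynomial (Fin (n + 1)) F) M),
          LinearMap.mem_ker, map_sub, hm, sub_self]
      have := hNhom 1 _ hd j
      rwa [map_sub, hz, sub_zero] at this
    choose J hJ using hbd
    obtain ⟨J0, hJ0⟩ := (B.image J).bddAbove
    refine ⟨J0, fun j hj x hx => ?_⟩
    have hq : ∀ q ∈ Submodule.span F (B : Set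
        (M ⧸ (I • ⊤ : Submodule (MvPolynomial (Fin (n + 1)) F) M))), ∀ m : M,
          (I • ⊤ : Submodule (MvPolynomial (Fin (n + 1)) F) M).mkQ m = q → π j m ∈ Nt 1 := by
      intro q hq
      refine Submodule.span_induction (p := fun q _ => ∀ m : M,
          (I • ⊤ : Submodule (MvPolynomial (Fin (n + 1)) F) M).mkQ m = q → π j m ∈ Nt 1)
        ?_ ?_ ?_ ?_ hq
      · intro q hqB m hm
        exact hJ q j (le_trans (hJ0 (by simpa using ⟨q, hqB, rfl⟩)) hj) m hm
      · intro m hm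
        apply hNhom
        rw [e1, ← Submodule.ker_mkQ (I • ⊤ : Submodule (MvPolynomial (Fin (n + 1)) F) M)]
        exact hm
      · intro p q _ _ hp hq m hm
        obtain ⟨m1, hm1⟩ := Submodule.mkQ_surjective _ p
        have h5 := hp m1 hm1
        have h6 := hq (m - m1) (by rw [map_sub, hm, hm1]; abel)
        have := Submodule.add_mem _ h5 h6
        rwa [← map_add, add_sub_cancel] at this
      · intro a q _ hq m hm
        obtain ⟨m1, hm1⟩ := Submodule.mkQ_surjective _ q
        have h5 := hq m1 hm1
        have h6 : π j (m - a • m1) ∈ Nt 1 := by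
          apply hNhom
          rw [e1, ← Submodule.ker_mkQ (I • ⊤ : Submodule (MvPolynomial (Fin (n + 1)) F) M),
            LinearMap.mem_ker, map_sub, hm, ← hm1, sub_eq_zero]
          rfl
        rw [map_sub, map_smul] at h6
        have h7 : a • π j m1 ∈ Nt 1 := by
          rw [← algebraMap_smul (MvPolynomial (Fin (n + 1)) F) a (π j m1)]
          exact Submodule.smul_mem _ _ h5
        have := Submodule.add_mem _ h6 h7
        rwa [sub_add_cancel] at this
    have := hq _ (by rw [hB]; trivial) x rfl
    rwa [h2 j x hx] at this
  have hlarge : ∀ t : ℕ, ∃ J : ℤ, ∀ j, J ≤ j → ∀ x ∈ 𝓜 j, x ∈ Nt t := by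
    obtain ⟨J1, hJ1⟩ := hlarge1
    intro t
    induction t with
    | zero => exact ⟨0, fun j _ x _ => by rw [hN0]; trivial⟩
    | succ t ih =>
      obtain ⟨J, hJ⟩ := ih
      refine ⟨max J1 (J + d), fun j hj x hx => ?_⟩
      refine hstep 0 j (Nt (t + 1)) ?_ x (hJ1 j (by omega) x hx) hx
      intro u _ hub g hg
      exact hgN t g hg u (hJ _ (by omega) u hub)
  have hNne : ∀ t : ℕ, ∃ b : ℤ, ∃ w ∈ Nt t, w ∈ 𝓜 b ∧ w ≠ 0 := by
    intro t
    by_contra hcon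
    push Not at hcon
    obtain ⟨J, hJ⟩ := hlarge t
    have hM0 : ∀ j, J ≤ j → ∀ x ∈ 𝓜 j, x = 0 := fun j hj x hx => hcon j x (hJ j hj x hx) hx
    apply hinf
    refine aux_fin (n + 1) J.toNat ?_
    intro m x hm
    apply hzero
    intro b
    rw [hπs m.degree _ (isHomogeneous_monomial 1 rfl)]
    by_cases hb : J ≤ b
    · apply hM0 b hb
      have := hgradedsmul m.degree _ _ _ (isHomogeneous_monomial (1 : F) (d := m) rfl)
        (h1 (b - m.degree) x)
      simpa using this
    · rw [hnegπ x _ (by omega), smul_zero]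
  -- translate the regularity hypotheses
  have hQ : ∀ t : ℕ, 1 ≤ t → (∃ x ∈ 𝓜 (d * t + f t - 1), x ∉ Nt t) ∧
      ∀ a : ℤ, d * t + f t - 1 < a → ∀ x ∈ 𝓜 a, x ∈ Nt t := by
    intro t ht
    have hiff : ∀ a : ℤ, (𝓜 a).map ((Nt t).mkQ.restrictScalars F) = ⊥ ↔
        ∀ x ∈ 𝓜 a, x ∈ Nt t := by
      intro a
      rw [eq_bot_iff, Submodule.map_le_iff_le_comap]
      constructor
      · intro h x hx
        have := h hx
        simpa using this
      · intro h x hx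
        simpa using h x hx
    obtain ⟨J, hJ⟩ := hlarge t
    have := aux_fl (n + 1) (fun j => (𝓜 j).map ((Nt t).mkQ.restrictScalars F)) (by
      rintro k a _ ⟨x, hx, rfl⟩
      exact ⟨_, hXM k a x hx, by simp⟩) J (fun a ha => (hiff a).2 (hJ a ha)) _ (hf t ht)
    constructor
    · have h5 := this.1
      simp only [ne_eq, hiff] at h5
      push Not at h5
      exact h5
    · intro a ha
      exact (hiff a).1 (this.2 a ha)
  let 𝓝 : ℕ → ℤ → Submodule F M := fun t j => (Nt t).restrictScalars F ⊓ 𝓜 j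
  have h𝓝 : ∀ t j x, x ∈ 𝓝 t j ↔ x ∈ Nt t ∧ x ∈ 𝓜 j := by
    intro t j x
    simp [𝓝]
  have hXN : ∀ t (k : Fin (n + 1)) (a : ℤ) (x : M), x ∈ 𝓝 t a →
      (X k : MvPolynomial (Fin (n + 1)) F) • x ∈ 𝓝 t (a + 1) := by
    intro t k a x hx
    rw [h𝓝] at hx ⊢
    exact ⟨Submodule.smul_mem _ _ hx.1, hXM k a x hx.2⟩
  have hR : ∀ t : ℕ, 1 ≤ t → IsRegularity F (n + 1) (𝓝 t) (d * t + e t) := he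
  have hRv : ∀ t : ℕ, 1 ≤ t → ∀ (i : ℕ) (j : ℤ), d * t + e t < j - i →
      torVanishes F (n + 1) (𝓝 t) i j := by
    intro t ht i j hij
    by_contra hc
    have := (hR t ht).1 i j hc
    omega
  have hlift : ∀ t : ℕ, 1 ≤ t → ∃ m : ℕ, ∀ a : ℤ, d * t + e t ≤ a → ∀ x ∈ 𝓜 a,
      ∃ y ∈ 𝓝 t a, x - y ∈ auxTors F (n + 1) M m := by
    intro t ht
    obtain ⟨J, hJ⟩ := hlarge t
    refine ⟨(J - (d * t + e t)).toNat, fun a ha => ?_⟩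
    exact aux_lift n 𝓜 (𝓝 t) hXM (hXN t) _ (hRv t ht) J
      (fun a ha x hx => (h𝓝 t a x).2 ⟨hJ a ha x hx, hx⟩) _ a ha (by omega)
  have hd : 1 ≤ d := by
    by_contra hd0
    have hd0 : d = 0 := by omega
    subst hd0
    obtain ⟨x, _, hx⟩ := (hQ 1 le_rfl).1
    obtain ⟨b, w, hw, _, hw0⟩ := hNne 1
    apply hx
    by_cases hG0 : ∃ g ∈ G, g ≠ 0
    · obtain ⟨g, hg, hg0⟩ := hG0
      have hgh : g.IsHomogeneous 0 := hG g hg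
      have hgc : g = C (coeff 0 g) := by
        rw [← totalDegree_eq_zero_iff_eq_C]
        exact hgh.totalDegree hg0
      have hc0 : coeff 0 g ≠ 0 := by
        intro h
        rw [h, C_0] at hgc
        exact hg0 hgc
      have : x = g • ((C (coeff 0 g)⁻¹ : MvPolynomial (Fin (n + 1)) F) • x) := by
        rw [← mul_smul]
        conv_rhs => rw [hgc]
        rw [coeff_C, if_pos rfl, ← C_mul, mul_inv_cancel₀ hc0, C_1, one_smul]
      rw [this]
      exact hgN 0 g hg _ (by rw [hN0]; trivial)
    · exfalso
      push Not at hG0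
      have hI : I = ⊥ := by
        rw [hIG, Ideal.span_eq_bot]
        exact hG0
      rw [hNs, hI] at hw
      simp at hw
      exact hw0 hw
  have hepos : ∀ t : ℕ, 1 ≤ t → 0 ≤ e t := by
    intro t ht
    by_contra hc
    have hlow : ∀ b : ℤ, b < d * t → 𝓝 t b = ⊥ := by
      intro b hb
      rw [eq_bot_iff]
      intro x hx
      rw [h𝓝] at hx
      exact hNneg t b hb x hx.1 hx.2
    have hall : ∀ b : ℤ, (d * t - 1 : ℤ) ≤ b → 𝓝 t b = ⊥ := by
      intro b hb
      induction b, hb using Int.leInduction with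
      | base => exact hlow _ (by omega)
      | succ b hb ih =>
        refine aux_tor0 (n + 1) (𝓝 t) (b + 1) (hRv t ht 0 (b + 1) (by push_cast; omega)) ?_
        rw [add_sub_cancel_right, ih]
    obtain ⟨b, w, hw, hwb, hw0⟩ := hNne t
    have hmem : w ∈ 𝓝 t b := (h𝓝 t b w).2 ⟨hw, hwb⟩
    have hbot : 𝓝 t b = ⊥ := by
      by_cases hb : b < d * t
      · exact hlow b hb
      · exact hall b (by omega)
    rw [hbot] at hmem
    exact hw0 (by simpa using hmem)
  have heanti : ∀ t : ℕ, 1 ≤ t → e (t + 1) ≤ e t := by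
    intro t ht
    by_contra hc
    obtain ⟨i, j, hij, hijr⟩ := (hR (t + 1) (by omega)).2
    push_cast at hijr
    rw [mul_add, mul_one] at hijr
    apply hij
    refine aux_sub (n + 1) (𝓝 t) (𝓝 (t + 1)) ?_ i j (hRv t ht i j (by omega)) ?_
    · intro a x hx
      rw [h𝓝] at hx ⊢
      exact ⟨hNle t hx.1, hx.2⟩
    · generalize hbj : j - i - 1 = b
      have hb : d * t + e t + d ≤ b := by omega
      intro w hw
      rw [h𝓝] at hw ⊢
      refine ⟨?_, hw.2⟩
      obtain ⟨s, rfl⟩ : ∃ s, t = s + 1 := ⟨t - 1, by omega⟩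
      refine hstep s b _ ?_ w hw.1 hw.2
      intro u hu hub g hg
      obtain ⟨m, hm⟩ := hlift (s + 1) ht
      obtain ⟨y, hy, hyt⟩ := hm (b - d) (by omega) u hub
      rw [h𝓝] at hy
      have hz : g • (u - y) = 0 := by
        refine aux_notors (n + 1) (𝓝 (s + 1)) (hXN (s + 1)) _ (hRv (s + 1) ht) m b (by omega) _
          ?_ (Submodule.smul_mem _ _ hyt)
        rw [h𝓝]
        refine ⟨hgN s g hg _ (Submodule.sub_mem _ hu (hNle s hy.1)), ?_⟩
        have := hgradedsmul d (b - d) g _ (hG g hg) (Submodule.sub_mem _ hub hy.2)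
        simpa using this
      rw [smul_sub, sub_eq_zero] at hz
      rw [hz]
      exact hgN (s + 1) g hg y hy.1
  have hfanti : ∀ t : ℕ, 1 ≤ t → f (t + 1) ≤ f t := by
    intro t ht
    by_contra hc
    obtain ⟨x, hx, hxn⟩ := (hQ (t + 1) (by omega)).1
    have hx0 := (hQ t ht).2
    apply hxn
    generalize hb : (d * (t + 1 : ℕ) + f (t + 1) - 1 : ℤ) = b at hx
    push_cast at hb
    rw [mul_add, mul_one] at hb
    obtain ⟨s, rfl⟩ : ∃ s, t = s + 1 := ⟨t - 1, by omega⟩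
    refine hstep s b _ ?_ x (hx0 b (by omega) x hx) hx
    intro u _ hub g hg
    exact hgN (s + 1) g hg u (hx0 _ (by omega) u hub)
  -- `M` has finite regularity
  obtain ⟨r, hr⟩ : ∃ r : ℤ, ∀ (i : ℕ) (j : ℤ), r < j - i → torVanishes F (n + 1) 𝓜 i j := by
    refine ⟨max (d * (1 : ℕ) + e 1) (d * (1 : ℕ) + f 1 - 1), fun i j hij => ?_⟩
    rw [max_lt_iff] at hij
    refine aux_sup (n + 1) 𝓜 (𝓝 1) (fun a x hx => ((h𝓝 1 a x).1 hx).2) i j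
      (hRv 1 le_rfl i j hij.1) ?_
    intro x hx
    exact (h𝓝 1 _ x).2 ⟨(hQ 1 le_rfl).2 _ hij.2 x hx, hx⟩
  have hef : ∀ t : ℕ, r.toNat + 1 ≤ t → e t = f t := by
    intro t ht
    have ht1 : 1 ≤ t := by omega
    have hdt : r < d * t := by
      have h5 : (t : ℤ) ≤ d * t := by
        have : (t : ℕ) ≤ d * t := Nat.le_mul_of_pos_left t hd
        exact_mod_cast this
      omega
    have he0 := hepos t ht1
    apply le_antisymm
    · by_contra hc
      obtain ⟨i, j, hij, hijr⟩ := (hR t ht1).2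
      apply hij
      refine aux_sub (n + 1) 𝓜 (𝓝 t) (fun a x hx => ((h𝓝 t a x).1 hx).2) i j
        (hr i j (by omega)) ?_
      intro x hx
      exact (h𝓝 t _ x).2 ⟨(hQ t ht1).2 _ (by omega) x hx, hx⟩
    · by_contra hc
      obtain ⟨x, hx, hxn⟩ := (hQ t ht1).1
      obtain ⟨m, hm⟩ := hlift t ht1
      obtain ⟨y, hy, hyt⟩ := hm _ (by omega) x hx
      rw [h𝓝] at hy
      have := aux_notors (n + 1) 𝓜 hXM r hr m _ (by omega) _ (Submodule.sub_mem _ hx hy.2) hyt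
      rw [sub_eq_zero] at this
      rw [this] at hxn
      exact hxn hy.1
  -- conclusion
  have heanti' : ∀ s t : ℕ, 1 ≤ s → s ≤ t → e t ≤ e s := by
    intro s t hs hst
    induction t, hst using Nat.le_induction with
    | base => exact le_rfl
    | succ t hst ih => exact (heanti t (by omega)).trans ih
  have hfanti' : ∀ s t : ℕ, 1 ≤ s → s ≤ t → f t ≤ f s := by
    intro s t hs hst
    induction t, hst using Nat.le_induction with
    | base => exact le_rfl
    | succ t hst ih => exact (hfanti t (by omega)).trans ih
  refine ⟨fun t ht => ⟨hepos t ht, heanti t ht⟩, ?_⟩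
  obtain ⟨c, ⟨t1, ht1, hc1⟩, hcmin⟩ := Int.exists_least_of_bdd
    (P := fun z => ∃ t : ℕ, 1 ≤ t ∧ z = e t)
    ⟨0, by rintro z ⟨t, ht, rfl⟩; exact hepos t ht⟩ ⟨e 1, 1, le_rfl, rfl⟩
  have hev : ∀ t, t1 ≤ t → e t = c := fun t ht =>
    le_antisymm (hc1 ▸ heanti' t1 t ht1 ht) (hcmin _ ⟨t, by omega, rfl⟩)
  refine ⟨c, ⟨?_, ?_⟩, ⟨?_, ?_⟩, t1, hev⟩
  · rintro z hz
    exact hcmin z hz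
  · intro z hz
    exact hz ⟨t1, ht1, hc1⟩
  · rintro z ⟨t, ht, rfl⟩
    have h5 := hfanti' t (max t (max t1 (r.toNat + 1))) ht (by omega)
    rw [← hef _ (by omega), hev _ (by omega)] at h5
    exact h5
  · intro z hz
    refine hz ⟨max t1 (r.toNat + 1), by omega, ?_⟩
    rw [← hef _ (by omega), hev _ (by omega)]
end

section
/- Let S = F[x_0,…,x_n] be a polynomial ring over a field F, and let I ⊆ S be an ideal generated by homogeneous forms of degree d such that S/I has finite length. Then for every t ≥ 1, every homogeneous polynomial of degree ≥ td + n(d−1) lies in I^t; equivalently, m^{td+n(d−1)} ⊆ I^t, where m = (x_0,…,x_n). -/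
open MvPolynomial

lemma hc_mul {σ F : Type*} [Field F] {d : ℕ} {g : MvPolynomial σ F} (hg : g.IsHomogeneous d)
    (a : MvPolynomial σ F) (s : ℕ) :
    homogeneousComponent s (a * g) = if d ≤ s then homogeneousComponent (s - d) a * g else 0 := by
  induction a using MvPolynomial.induction_on' with
  | monomial m r =>
    have h1 : (monomial m r : MvPolynomial σ F).IsHomogeneous m.degree :=
      isHomogeneous_monomial r rfl
    rw [homogeneousComponent_of_mem (h1.mul hg), homogeneousComponent_of_mem h1]
    by_cases h : d ≤ s
    · by_cases h' : s - d = m.degree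
      · rw [if_pos h, if_pos h', if_pos (by omega)]
      · rw [if_pos h, if_neg h', if_neg (by omega), zero_mul]
    · rw [if_neg h, if_neg (by omega)]
  | add p q hp hq =>
    rw [add_mul, map_add, hp, hq]
    split_ifs
    · rw [map_add, add_mul]
    · simp

/-- an ideal closed under taking homogeneous components -/
def HI {σ F : Type*} [Field F] (L : Ideal (MvPolynomial σ F)) : Prop :=
  ∀ u ∈ L, ∀ s, homogeneousComponent s u ∈ L

/-- `f` is a nonzerodivisor modulo `L` -/
def NZ {σ F : Type*} [Field F] (L : Ideal (MvPolynomial σ F)) (f : MvPolynomial σ F) : Prop :=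
  ∀ u, f * u ∈ L → u ∈ L

lemma HI.span {σ F : Type*} [Field F] {G : Set (MvPolynomial σ F)}
    (hG : ∀ g ∈ G, ∃ d, g.IsHomogeneous d) : HI (Ideal.span G) := by
  intro u hu
  induction hu using Submodule.span_induction with
  | mem x h =>
    intro s
    obtain ⟨d, hd⟩ := hG x h
    rw [homogeneousComponent_of_mem hd]
    split_ifs
    · exact Ideal.subset_span h
    · exact zero_mem _
  | zero => intro s; simp
  | add x y _ _ hx hy => intro s; rw [map_add]; exact add_mem (hx s) (hy s)
  | smul a x hx' hx =>
    intro s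
    rw [smul_eq_mul, ← sum_homogeneousComponent x, Finset.mul_sum, map_sum]
    refine sum_mem fun i _ => ?_
    rw [hc_mul (homogeneousComponent_isHomogeneous i x)]
    split_ifs
    · exact Ideal.mul_mem_left _ _ (hx i)
    · exact zero_mem _

lemma HI.sup {σ F : Type*} [Field F] {L M : Ideal (MvPolynomial σ F)} (hL : HI L) (hM : HI M) :
    HI (L ⊔ M) := by
  intro u hu s
  obtain ⟨a, ha, b, hb, rfl⟩ := Submodule.mem_sup.1 hu
  rw [map_add]
  exact Submodule.mem_sup.2 ⟨_, hL a ha s, _, hM b hb s, rfl⟩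

lemma mem_sup_single {R : Type*} [CommRing R] {L : Ideal R} {x u : R} :
    u ∈ L ⊔ Ideal.span {x} ↔ ∃ l ∈ L, ∃ v, u = l + x * v := by
  rw [Submodule.mem_sup]
  constructor
  · rintro ⟨l, hl, b, hb, rfl⟩
    obtain ⟨v, rfl⟩ := Ideal.mem_span_singleton.1 hb
    exact ⟨l, hl, v, rfl⟩
  · rintro ⟨l, hl, v, rfl⟩
    exact ⟨l, hl, x * v, Ideal.mem_span_singleton.2 ⟨v, rfl⟩, rfl⟩

lemma hom_mem_sup_single {σ F : Type*} [Field F] {L : Ideal (MvPolynomial σ F)} (hL : HI L)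
    {e s : ℕ} {x u : MvPolynomial σ F} (hx : x.IsHomogeneous e) (hu : u.IsHomogeneous (s + e))
    (h : u ∈ L ⊔ Ideal.span {x}) : ∃ l ∈ L, ∃ v, v.IsHomogeneous s ∧ u = l + x * v := by
  obtain ⟨l, hl, v, huv⟩ := mem_sup_single.1 h
  refine ⟨_, hL l hl (s + e), homogeneousComponent s v, homogeneousComponent_isHomogeneous _ _, ?_⟩
  have := congrArg (homogeneousComponent (s + e)) huv
  rw [map_add, mul_comm, hc_mul hx, if_pos (by omega), homogeneousComponent_eq_self hu,
    Nat.add_sub_cancel] at this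
  rw [this, mul_comm]

lemma swap_one {σ F : Type*} [Field F] {L : Ideal (MvPolynomial σ F)} (hL : HI L)
    {d : ℕ} {x f : MvPolynomial σ F} (hx : x.IsHomogeneous 1) (hf : f.IsHomogeneous d)
    (h1 : NZ L x) (h2 : NZ (L ⊔ Ideal.span {x}) f) : NZ L f := by
  have key : ∀ s, ∀ u : MvPolynomial σ F, u.IsHomogeneous s → f * u ∈ L → u ∈ L := by
    intro s
    induction s with
    | zero =>
      intro u hu hfu
      obtain ⟨l, hl, v, huv⟩ := mem_sup_single.1 (h2 u (Submodule.mem_sup_left hfu))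
      have := congrArg (homogeneousComponent 0) huv
      rw [map_add, mul_comm, hc_mul hx, if_neg (by omega), homogeneousComponent_eq_self hu,
        add_zero] at this
      rw [this]; exact hL l hl 0
    | succ s ih =>
      intro u hu hfu
      obtain ⟨l, hl, v, hv, huv⟩ :=
        hom_mem_sup_single hL hx hu (h2 u (Submodule.mem_sup_left hfu))
      have hv' : v ∈ L := by
        apply ih v hv
        apply h1
        have : x * (f * v) = f * u - f * l := by rw [huv]; ring
        rw [this]
        exact sub_mem hfu (Ideal.mul_mem_left _ _ hl)
      rw [huv]
      exact add_mem hl (Ideal.mul_mem_left _ _ hv')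
  intro u hu
  rw [← sum_homogeneousComponent u]
  refine sum_mem fun i _ => ?_
  apply key i _ (homogeneousComponent_isHomogeneous _ _)
  have := hL _ hu (i + d)
  rwa [mul_comm, hc_mul hf, if_pos (by omega), Nat.add_sub_cancel, mul_comm] at this

lemma swap_two {R : Type*} [CommRing R] {L : Ideal R} {x f : R}
    (h1 : ∀ u, x * u ∈ L → u ∈ L) (h2 : ∀ u, f * u ∈ L ⊔ Ideal.span {x} → u ∈ L ⊔ Ideal.span {x})
    (u : R) (hu : x * u ∈ L ⊔ Ideal.span {f}) : u ∈ L ⊔ Ideal.span {f} := by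
  obtain ⟨l, hl, v, huv⟩ := mem_sup_single.1 hu
  obtain ⟨l', hl', w, hw⟩ := mem_sup_single.1 (h2 v (mem_sup_single.2
    ⟨-l, neg_mem hl, u, by rw [huv]; ring⟩))
  refine mem_sup_single.2 ⟨u - f * w, h1 _ ?_, w, by ring⟩
  have : x * (u - f * w) = l + f * l' := by rw [mul_sub, huv, hw]; ring
  rw [this]
  exact add_mem hl (Ideal.mul_mem_left _ _ hl')

/-- multiplication on graded pieces of `S/L` -/
noncomputable def mulQ {σ F : Type*} [Field F] (L : Ideal (MvPolynomial σ F)) {d : ℕ}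
    {f : MvPolynomial σ F} (hf : f.IsHomogeneous d) (s : ℕ) :
    (homogeneousSubmodule σ F s ⧸ (L.restrictScalars F).comap (homogeneousSubmodule σ F s).subtype)
    →ₗ[F] (homogeneousSubmodule σ F (d + s) ⧸
      (L.restrictScalars F).comap (homogeneousSubmodule σ F (d + s)).subtype) :=
  Submodule.mapQ _ _
    (((LinearMap.mulLeft F f).domRestrict (homogeneousSubmodule σ F s)).codRestrict
      (homogeneousSubmodule σ F (d + s)) (fun u => hf.mul u.2))
    (fun u hu => by
      simp only [Submodule.mem_comap, Submodule.subtype_apply, Submodule.restrictScalars_mem] at hu ⊢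
      exact Ideal.mul_mem_left _ _ hu)

lemma mulQ_inj {σ F : Type*} [Field F] (L : Ideal (MvPolynomial σ F)) {d : ℕ}
    {f : MvPolynomial σ F} (hf : f.IsHomogeneous d) (s : ℕ) (h : NZ L f) :
    Function.Injective (mulQ L hf s) := by
  rw [← LinearMap.ker_eq_bot, LinearMap.ker_eq_bot']
  intro m
  obtain ⟨u, rfl⟩ := Submodule.Quotient.mk_surjective _ m
  intro hm
  rw [mulQ, Submodule.mapQ_apply, Submodule.Quotient.mk_eq_zero] at hm
  rw [Submodule.Quotient.mk_eq_zero]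
  exact h _ hm

lemma mulQ_surj_iff {σ F : Type*} [Field F] (L : Ideal (MvPolynomial σ F)) {d : ℕ}
    {f : MvPolynomial σ F} (hf : f.IsHomogeneous d) (s : ℕ) :
    Function.Surjective (mulQ L hf s) ↔ ∀ u : MvPolynomial σ F, u.IsHomogeneous (d + s) →
      ∃ l ∈ L, ∃ v, v.IsHomogeneous s ∧ u = l + f * v := by
  constructor
  · intro h u hu
    obtain ⟨m, hm⟩ := h (Submodule.Quotient.mk ⟨u, hu⟩)
    obtain ⟨v, rfl⟩ := Submodule.Quotient.mk_surjective _ m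
    rw [mulQ, Submodule.mapQ_apply, Submodule.Quotient.eq] at hm
    have hm' : f * v.1 - u ∈ L := hm
    exact ⟨-(f * v.1 - u), neg_mem hm', v.1, v.2, by ring⟩
  · intro h m
    obtain ⟨u, rfl⟩ := Submodule.Quotient.mk_surjective _ m
    obtain ⟨l, hl, v, hv, huv⟩ := h u.1 u.2
    refine ⟨Submodule.Quotient.mk ⟨v, hv⟩, ?_⟩
    rw [mulQ, Submodule.mapQ_apply, Submodule.Quotient.eq]
    change f * v - u.1 ∈ L
    rw [huv]
    have : f * v - (l + f * v) = - l := by ring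
    rw [this]
    exact neg_mem hl

lemma top_step {σ F : Type*} [Finite σ] [Field F] {L : Ideal (MvPolynomial σ F)} (hL : HI L)
    {d e : ℕ} {x f : MvPolynomial σ F} (hx : x.IsHomogeneous 1) (hf : f.IsHomogeneous d)
    (h1 : NZ L x) (h2 : NZ L f)
    (htop : ∀ s, e + 1 ≤ s → ∀ u : MvPolynomial σ F, u.IsHomogeneous s → u ∈ L ⊔ Ideal.span {x})
    (s : ℕ) (hs : e + d ≤ s) (u : MvPolynomial σ F) (hu : u.IsHomogeneous s) :
    u ∈ L ⊔ Ideal.span {f} := by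
  obtain ⟨r, rfl⟩ : ∃ r, s = d + r := ⟨s - d, by omega⟩
  have hr : e ≤ r := by omega
  have hxd : (x ^ d).IsHomogeneous d := by simpa using hx.pow d
  have hnz : ∀ k, NZ L (x ^ k) := by
    intro k
    induction k with
    | zero => intro u hu; simpa using hu
    | succ k ih =>
      intro u hu
      apply h1; apply ih
      rwa [← mul_assoc, ← pow_succ]
  have hsurj : ∀ k, ∀ u : MvPolynomial σ F, u.IsHomogeneous (k + r) →
      ∃ l ∈ L, ∃ v, v.IsHomogeneous r ∧ u = l + x ^ k * v := by
    intro k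
    induction k with
    | zero => intro u hu; exact ⟨0, zero_mem _, u, by simpa using hu, by simp⟩
    | succ k ih =>
      intro u hu
      have hu' : u.IsHomogeneous (k + r + 1) := by rwa [add_right_comm] at hu
      obtain ⟨l, hl, v, hv, huv⟩ := hom_mem_sup_single hL hx hu' (htop _ (by omega) u hu')
      obtain ⟨l', hl', w, hw, hvw⟩ := ih v hv
      refine ⟨l + x * l', add_mem hl (Ideal.mul_mem_left _ _ hl'), w, hw, ?_⟩
      rw [huv, hvw]; ring
  have hfin : ∀ s, Module.Finite F (homogeneousSubmodule σ F s) := fun s =>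
    Module.Finite.iff_fg.2 (homogeneousSubmodule_fg σ F s)
  have hb : Function.Bijective (mulQ L hxd r) :=
    ⟨mulQ_inj L hxd r (hnz d), (mulQ_surj_iff L hxd r).2 (hsurj d)⟩
  have hrank := (LinearEquiv.ofBijective _ hb).finrank_eq
  have hfs := (LinearMap.injective_iff_surjective_of_finrank_eq_finrank hrank).1
    (mulQ_inj L hf r h2)
  obtain ⟨l, hl, v, -, huv⟩ := (mulQ_surj_iff L hf r).1 hfs u hu
  exact mem_sup_single.2 ⟨l, hl, v, huv⟩

lemma exists_nz {σ F : Type*} [Finite σ] [Field F] [Infinite F] {L : Ideal (MvPolynomial σ F)}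
    {x : MvPolynomial σ F} (h1 : NZ L x) (G : Set (MvPolynomial σ F)) {k : ℕ}
    (hk : x ^ k ∈ Ideal.span G) : ∃ f ∈ Submodule.span F G, NZ L f := by
  classical
  let S := MvPolynomial σ F
  have hfin : (associatedPrimes S (S ⧸ L)).Finite := associatedPrimes.finite S (S ⧸ L)
  let V := Submodule.span F G
  let φ : Ideal S → Subspace F V := fun P => (P.restrictScalars F).comap V.subtype
  have htop : ⊤ ∉ hfin.toFinset.image φ := by
    intro h
    obtain ⟨P, hP, hPV⟩ := Finset.mem_image.1 h
    have hP' : P ∈ associatedPrimes S (S ⧸ L) := by simpa using hP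
    have hPp : P.IsPrime := hP'.isPrime
    have hGP : Ideal.span G ≤ P := by
      rw [Ideal.span_le]
      intro g hg
      have : (⟨g, Submodule.subset_span hg⟩ : V) ∈ φ P := by rw [hPV]; trivial
      exact this
    have hxP : x ∈ P := hPp.mem_of_pow_mem k (hGP hk)
    have : x ∈ ⋃ p ∈ associatedPrimes S (S ⧸ L), (p : Set S) :=
      Set.mem_biUnion hP' hxP
    rw [biUnion_associatedPrimes_eq_zero_divisors] at this
    obtain ⟨y, hy, hxy⟩ := this
    obtain ⟨u, rfl⟩ := Ideal.Quotient.mk_surjective y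
    apply hy
    rw [Ideal.Quotient.eq_zero_iff_mem]
    apply h1
    rw [← Ideal.Quotient.eq_zero_iff_mem]
    exact hxy
  have hne := Subspace.biUnion_ne_univ_of_top_notMem htop
  obtain ⟨f, hf⟩ := (Set.ne_univ_iff_exists_notMem _).1 hne
  refine ⟨f.1, f.2, ?_⟩
  intro u hu
  by_contra hcon
  have : f.1 ∈ ⋃ p ∈ associatedPrimes S (S ⧸ L), (p : Set S) := by
    rw [biUnion_associatedPrimes_eq_zero_divisors]
    refine ⟨Ideal.Quotient.mk L u, ?_, ?_⟩
    · rwa [Ne, Ideal.Quotient.eq_zero_iff_mem]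
    · exact Ideal.Quotient.eq_zero_iff_mem.2 hu
  obtain ⟨P, hP, hfP⟩ := Set.mem_iUnion₂.1 this
  apply hf
  refine Set.mem_iUnion₂.2 ⟨φ P, Finset.mem_image.2 ⟨P, by simpa using hP, rfl⟩, hfP⟩

/-- ideal of the variables with index at least `k` -/
noncomputable def XI (F : Type*) [Field F] (n k : ℕ) : Ideal (MvPolynomial (Fin (n + 1)) F) :=
  Ideal.span (X '' {j : Fin (n + 1) | k ≤ j.val})

lemma XI_hi (F : Type*) [Field F] (n k : ℕ) : HI (XI F n k) :=
  HI.span (by rintro _ ⟨j, -, rfl⟩; exact ⟨1, isHomogeneous_X _ _⟩)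

lemma XI_succ (F : Type*) [Field F] (n k : ℕ) (hk : k < n + 1) :
    XI F n k = XI F n (k + 1) ⊔ Ideal.span {X ⟨k, hk⟩} := by
  rw [XI, XI, ← Ideal.span_union, ← Set.image_singleton, ← Set.image_union]
  congr 2
  ext j
  simp only [Set.mem_ofPred_eq, Set.mem_union, Set.mem_singleton_iff, Fin.ext_iff]
  omega

lemma XI_nz (F : Type*) [Field F] (n k : ℕ) (hk : k < n + 1) :
    NZ (XI F n (k + 1)) (X ⟨k, hk⟩) := by
  intro u hu
  rw [XI, mem_ideal_span_X_image] at hu ⊢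
  intro m hm
  obtain ⟨i, hi, him⟩ := hu (Finsupp.single ⟨k, hk⟩ 1 + m) (by
    rw [mem_support_iff, coeff_X_mul]; exact mem_support_iff.1 hm)
  refine ⟨i, hi, ?_⟩
  have : (⟨k, hk⟩ : Fin (n + 1)) ≠ i := by
    rintro rfl
    simp at hi
  simpa [Finsupp.single_apply, this] using him

lemma XI_top (F : Type*) [Field F] (n : ℕ) (s : ℕ) (hs : 1 ≤ s)
    (u : MvPolynomial (Fin (n + 1)) F) (hu : u.IsHomogeneous s) : u ∈ XI F n 0 := by
  rw [XI, mem_ideal_span_X_image]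
  intro m hm
  have h := hu.degree_eq_sum_deg_support hm
  by_contra hcon
  push Not at hcon
  have : m = 0 := by ext i; exact hcon i (Nat.zero_le _)
  subst this
  simp at h
  omega

lemma X_hom (F : Type*) [Field F] (n : ℕ) (i : Fin (n + 1)) :
    (X i : MvPolynomial (Fin (n + 1)) F).IsHomogeneous 1 := isHomogeneous_X F i

lemma main_inf {F : Type*} [Field F] [Infinite F] (n d : ℕ) (hd : 1 ≤ d)
    (G : Set (MvPolynomial (Fin (n + 1)) F))
    (hG : ∀ g ∈ G, g ∈ homogeneousSubmodule (Fin (n + 1)) F d)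
    (hX : ∀ i, ∃ k, (X i : MvPolynomial (Fin (n + 1)) F) ^ k ∈ Ideal.span G)
    (i : ℕ) (hi : i ≤ n + 1) :
    ∃ J : Ideal (MvPolynomial (Fin (n + 1)) F), HI J ∧ J ≤ Ideal.span G ∧
      (∀ k (hk : k < n + 1), i ≤ k → NZ (J ⊔ XI F n (k + 1)) (X ⟨k, hk⟩)) ∧
      (∀ s, i * (d - 1) + 1 ≤ s → ∀ u : MvPolynomial (Fin (n + 1)) F, u.IsHomogeneous s →
        u ∈ J ⊔ XI F n i) := by
  induction i with
  | zero =>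
    refine ⟨⊥, ?_, bot_le, ?_, ?_⟩
    · intro u hu s
      rw [Ideal.mem_bot] at hu
      simp [hu]
    · intro k hk _
      rw [bot_sup_eq]
      exact XI_nz F n k hk
    · intro s hs u hu
      rw [bot_sup_eq]
      exact XI_top F n s (by omega) u hu
  | succ i ih =>
    obtain ⟨J, hJ, hJG, hnz, htop⟩ := ih (by omega)
    have hi' : i < n + 1 := by omega
    obtain ⟨k₀, hk₀⟩ := hX ⟨i, hi'⟩
    have hx := hnz i hi' le_rfl
    obtain ⟨f, hfG, hf⟩ := exists_nz hx G hk₀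
    have hfd : f.IsHomogeneous d := by
      have : Submodule.span F G ≤ homogeneousSubmodule (Fin (n + 1)) F d :=
        Submodule.span_le.2 hG
      exact this hfG
    have hfI : f ∈ Ideal.span G := by
      have : Submodule.span F G ≤ (Ideal.span G).restrictScalars F :=
        Submodule.span_le.2 (fun g hg => Ideal.subset_span hg)
      exact this hfG
    have hsucc : ∀ k (hk : k < n + 1), J ⊔ XI F n k =
        (J ⊔ XI F n (k + 1)) ⊔ Ideal.span {X ⟨k, hk⟩} := by
      intro k hk
      rw [XI_succ F n k hk, sup_assoc]
    have hfk : ∀ k, i + 1 ≤ k → k ≤ n + 1 → NZ (J ⊔ XI F n k) f := by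
      intro k hk
      induction k, hk using Nat.le_induction with
      | base => intro _; exact hf
      | succ k hk ih2 =>
        intro hkn
        have hkn' : k < n + 1 := by omega
        have e1 := ih2 (by omega)
        rw [hsucc k hkn'] at e1
        have e2 := hnz k hkn' (by omega)
        have e3 : HI (J ⊔ XI F n (k + 1)) := HI.sup hJ (XI_hi F n (k + 1))
        have e4 : (X ⟨k, hkn'⟩ : MvPolynomial (Fin (n + 1)) F).IsHomogeneous 1 :=
          X_hom F n _
        exact swap_one e3 e4 hfd e2 e1
    refine ⟨J ⊔ Ideal.span {f}, ?_, ?_, ?_, ?_⟩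
    · exact hJ.sup (HI.span (by rintro g rfl; exact ⟨d, hfd⟩))
    · exact sup_le hJG ((Ideal.span_singleton_le_iff_mem _).2 hfI)
    · intro k hk hik
      rw [sup_right_comm]
      have h2 := hfk k hik hk.le
      rw [hsucc k hk] at h2
      exact swap_two (hnz k hk (by omega)) h2
    · intro s hs u hu
      rw [sup_right_comm]
      refine top_step (e := i * (d - 1)) (hJ.sup (XI_hi F n _)) (X_hom F n ⟨i, hi'⟩) hfd
        hx hf ?_ s ?_ u hu
      · rw [← hsucc i hi']
        exact htop
      · rw [add_mul] at hs
        omega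

lemma main_inf' {F : Type*} [Field F] [Infinite F] (n d : ℕ) (hd : 1 ≤ d)
    (G : Set (MvPolynomial (Fin (n + 1)) F))
    (hG : ∀ g ∈ G, g ∈ homogeneousSubmodule (Fin (n + 1)) F d)
    (hX : ∀ i, ∃ k, (X i : MvPolynomial (Fin (n + 1)) F) ^ k ∈ Ideal.span G)
    (s : ℕ) (hs : d + n * (d - 1) ≤ s) (u : MvPolynomial (Fin (n + 1)) F)
    (hu : u.IsHomogeneous s) : u ∈ Ideal.span G := by
  obtain ⟨J, -, hJG, -, htop⟩ := main_inf n d hd G hG hX (n + 1) le_rfl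
  have h := htop s (by rw [add_mul]; omega) u hu
  have hX0 : XI F n (n + 1) = ⊥ := by
    rw [XI, Ideal.span_eq_bot]
    rintro _ ⟨j, hj, rfl⟩
    have := j.2
    simp only [Set.mem_ofPred_eq] at hj
    omega
  rw [hX0, sup_bot_eq] at h
  exact hJG h

lemma X_pow_mem {F : Type*} [Field F] {n : ℕ} {I : Ideal (MvPolynomial (Fin (n + 1)) F)}
    (hI : HI I) (hfl : Module.Finite F (MvPolynomial (Fin (n + 1)) F ⧸ I)) (i : Fin (n + 1)) :
    ∃ k, (X i : MvPolynomial (Fin (n + 1)) F) ^ k ∈ I := by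
  have hint : IsIntegral F (Ideal.Quotient.mk I (X i)) := IsIntegral.of_finite F _
  obtain ⟨p, hp, hpe⟩ := hint
  have hmem : Polynomial.aeval (X i : MvPolynomial (Fin (n + 1)) F) p ∈ I := by
    rw [← Ideal.Quotient.eq_zero_iff_mem, ← Ideal.Quotient.mkₐ_eq_mk F,
      ← Polynomial.aeval_algHom_apply]
    exact hpe
  refine ⟨p.natDegree, ?_⟩
  have h2 := hI _ hmem p.natDegree
  rw [Polynomial.aeval_eq_sum_range, map_sum, Finset.sum_eq_single p.natDegree] at h2
  · rw [hp.coeff_natDegree, one_smul, homogeneousComponent_eq_self (isHomogeneous_X_pow i _)] at h2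
    exact h2
  · intro b _ hb
    rw [map_smul, homogeneousComponent_of_mem (isHomogeneous_X_pow i b), if_neg (Ne.symm hb),
      smul_zero]
  · intro h; simp at h

lemma main_one {F : Type*} [Field F] (n d : ℕ) (hd : 1 ≤ d)
    (G : Set (MvPolynomial (Fin (n + 1)) F))
    (hG : ∀ g ∈ G, g ∈ homogeneousSubmodule (Fin (n + 1)) F d)
    (hfl : Module.Finite F (MvPolynomial (Fin (n + 1)) F ⧸ Ideal.span G))
    (s : ℕ) (hs : d + n * (d - 1) ≤ s) (u : MvPolynomial (Fin (n + 1)) F)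
    (hu : u.IsHomogeneous s) : u ∈ Ideal.span G := by
  let K := AlgebraicClosure F
  let A := MvPolynomial (Fin (n + 1)) F
  let B := MvPolynomial (Fin (n + 1)) K
  let : Algebra A B := MvPolynomial.algebraMvPolynomial
  have hff : Module.FaithfullyFlat A B :=
    .of_linearEquiv _ _ (Algebra.IsPushout.equiv F A K B).symm.toLinearEquiv
  rw [← Ideal.comap_map_eq_self_of_faithfullyFlat (B := B) (Ideal.span G), Ideal.mem_comap,
    Ideal.map_span]
  refine main_inf' (F := K) n d hd _ ?_ ?_ s hs _ (hu.map (algebraMap F K))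
  · rintro _ ⟨g, hg, rfl⟩
    exact IsHomogeneous.map (hG g hg) (algebraMap F K)
  · intro i
    obtain ⟨k, hk⟩ := X_pow_mem (HI.span (fun g hg => ⟨d, hG g hg⟩)) hfl i
    refine ⟨k, ?_⟩
    rw [← Ideal.map_span]
    have := Ideal.mem_map_of_mem (algebraMap A B) hk
    rw [map_pow] at this
    convert this
    exact (map_X (algebraMap F K) i).symm

lemma main_t {F : Type*} [Field F] (n d : ℕ) (hd : 1 ≤ d)
    (G : Set (MvPolynomial (Fin (n + 1)) F))
    (hG : ∀ g ∈ G, g ∈ homogeneousSubmodule (Fin (n + 1)) F d)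
    (hfl : Module.Finite F (MvPolynomial (Fin (n + 1)) F ⧸ Ideal.span G)) (t : ℕ) :
    ∀ (s : ℕ), t * d + n * (d - 1) ≤ s → ∀ (u : MvPolynomial (Fin (n + 1)) F),
    u.IsHomogeneous s → u ∈ Ideal.span G ^ t := by
  induction t with
  | zero => intro s _ u _; simp
  | succ t ih =>
    intro s hs u hu
    rw [add_mul, one_mul] at hs
    have h1 := main_one n d hd G hG hfl s (by omega) u hu
    rw [← homogeneousComponent_eq_self hu]
    have hds : d ≤ s := by omega
    rw [← Ideal.submodule_span_eq, Submodule.mem_span_set'] at h1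
    obtain ⟨m, a, g, rfl⟩ := h1
    rw [map_sum]
    refine sum_mem fun j _ => ?_
    rw [smul_eq_mul, hc_mul (hG _ (g j).2), if_pos hds, pow_succ]
    exact Ideal.mul_mem_mul (ih (s - d) (by omega) _ (homogeneousComponent_isHomogeneous _ _))
      (Ideal.subset_span (g j).2)

theorem stmt_8 {F : Type*} [Field F] (n : ℕ) (d : ℕ)
    (I : Ideal (MvPolynomial (Fin (n + 1)) F))
    (G : Set (MvPolynomial (Fin (n + 1)) F))
    (hG : ∀ g ∈ G, g ∈ homogeneousSubmodule (Fin (n + 1)) F d)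
    (hIG : I = Ideal.span G)
    (hfl : Module.Finite F (MvPolynomial (Fin (n + 1)) F ⧸ I))
    (t : ℕ) (ht : 1 ≤ t) :
    Ideal.span (Set.range (X : Fin (n + 1) → MvPolynomial (Fin (n + 1)) F)) ^
        (t * d + n * (d - 1)) ≤ I ^ t := by
  subst hIG
  rcases Nat.eq_zero_or_pos d with rfl | hd
  · have htop : Ideal.span G = ⊤ := by
      by_contra hne
      have hG0 : ∀ g ∈ G, g = 0 := by
        intro g hg
        have h0 := (totalDegree_zero_iff_isHomogeneous _).2 (hG g hg)
        rw [totalDegree_eq_zero_iff_eq_C] at h0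
        by_contra hg0
        apply hne
        apply Ideal.eq_top_of_isUnit_mem _ (Ideal.subset_span hg)
        rw [h0]
        apply IsUnit.map
        rw [isUnit_iff_ne_zero]
        intro hc
        rw [hc, C_0] at h0
        exact hg0 h0
      obtain ⟨k, hk⟩ := X_pow_mem (HI.span (fun g hg => ⟨0, hG g hg⟩)) hfl 0
      rw [Ideal.span_eq_bot.2 hG0, Ideal.mem_bot] at hk
      exact pow_ne_zero k (X_ne_zero 0) hk
    rw [htop, Ideal.top_pow]
    exact le_top
  · have key : Ideal.span (Set.range (X : Fin (n + 1) → MvPolynomial (Fin (n + 1)) F)) =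
        idealOfVars (Fin (n + 1)) F := rfl
    intro u hu
    rw [key, mem_pow_idealOfVars_iff] at hu
    rw [u.as_sum]
    refine sum_mem fun m hm => ?_
    exact main_t n d hd G hG hfl t m.degree (hu m hm) _ (isHomogeneous_monomial _ rfl)
end

section
/- Let S = F[x_0,…,x_n] be a polynomial ring over a field F with maximal homogeneous ideal m = (x_0,…,x_n), and let I ⊆ S be generated by a regular sequence f_0,…,f_n of forms of degree d. Then for every t ≥ 1, the largest degree s with (S/I^t)_s ≠ 0 is exactly td + n(d−1) − 1; that is, m^{td+n(d−1)} ⊆ I^t but m^{td+n(d−1)−1} ⊄ I^t. -/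
open MvPolynomial

namespace Stmt9

section alg
variable {R : Type*} [CommRing R]

lemma pow_decomp (J' : Ideal R) (f : R) (s : ℕ) :
    (J' ⊔ Ideal.span {f}) ^ (s + 1) ≤
      Ideal.span {f} * (J' ⊔ Ideal.span {f}) ^ s ⊔ J' ^ (s + 1) := by
  induction s with
  | zero => simp [sup_comm]
  | succ s ih =>
    set J := J' ⊔ Ideal.span {f} with hJ
    have hle : J' ≤ J := le_sup_left
    calc J ^ (s + 1 + 1) = J * J ^ (s + 1) := pow_succ' _ _
      _ ≤ J * (Ideal.span {f} * J ^ s ⊔ J' ^ (s + 1)) := Ideal.mul_mono_right ih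
      _ = Ideal.span {f} * (J * J ^ s) ⊔ J * J' ^ (s + 1) := by
          rw [Ideal.mul_sup, mul_left_comm]
      _ = Ideal.span {f} * J ^ (s + 1) ⊔ (J' * J' ^ (s + 1) ⊔ Ideal.span {f} * J' ^ (s + 1)) := by
          rw [← pow_succ', hJ, Ideal.sup_mul]
      _ ≤ _ := by
          refine sup_le le_sup_left (sup_le ?_ ?_)
          · rw [← pow_succ']; exact le_sup_right
          · exact le_sup_of_le_left (Ideal.mul_mono_right (Ideal.pow_right_mono hle _))

lemma K_decomp (K J' : Ideal R) (f : R) (s : ℕ) :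
    K * (J' ⊔ Ideal.span {f}) ^ (s + 1) ≤
      Ideal.span {f} * (K * (J' ⊔ Ideal.span {f}) ^ s) ⊔ K * J' ^ (s + 1) := by
  refine (Ideal.mul_mono_right (pow_decomp J' f s)).trans ?_
  rw [Ideal.mul_sup, mul_left_comm]

lemma mem_decomp {f : R} {A B : Ideal R} {c : R} (h : c ∈ Ideal.span {f} * A ⊔ B) :
    ∃ b ∈ A, ∃ c' ∈ B, c = f * b + c' := by
  obtain ⟨y, hy, z, hz, rfl⟩ := Submodule.mem_sup.1 h
  obtain ⟨b, hb, rfl⟩ := Ideal.mem_span_singleton_mul.1 hy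
  exact ⟨b, hb, z, hz, rfl⟩

/-- `x` is a nonzerodivisor modulo `J`. -/
def Nzd (x : R) (J : Ideal R) : Prop := ∀ y, x * y ∈ J → y ∈ J

def Good (J : Ideal R) : Prop := ∀ K : Ideal R, J ≤ K → ∀ x, Nzd x K →
  ∀ s c, c ∈ J ^ s → x * c ∈ K * J ^ s → c ∈ K * J ^ s

lemma Good.nzd_pow {J : Ideal R} (h : Good J) {x : R} (hx : Nzd x J) (s : ℕ) : Nzd x (J ^ s) := by
  induction s with
  | zero => intro y _; simp
  | succ s ih =>
    intro y hy
    have h1 := ih y (Ideal.pow_le_pow_right (Nat.le_succ s) hy)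
    rw [pow_succ'] at hy ⊢
    exact h J le_rfl x hx s y h1 hy

lemma good_bot : Good (⊥ : Ideal R) := by
  intro K _ x hx s c hc hxc
  cases s with
  | zero => simp at hxc ⊢; exact hx c hxc
  | succ s =>
    have : (⊥ : Ideal R) ^ (s + 1) = ⊥ := by
      rw [pow_succ]; simp
    rw [this] at hc ⊢
    simp at hc; simp [hc]

lemma good_step {J' : Ideal R} (h : Good J') {f : R} (hf : Nzd f J') :
    Good (J' ⊔ Ideal.span {f}) := by
  intro K hK x hx s
  set J := J' ⊔ Ideal.span {f} with hJ
  have hJ'J : J' ≤ J := le_sup_left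
  have hfJ : f ∈ J := Ideal.mem_sup_right (Ideal.mem_span_singleton_self f)
  induction s with
  | zero => intro c _ hxc; simp at hxc ⊢; exact hx c hxc
  | succ s ih =>
    intro c hc hxc
    have hsub : J' ^ (s + 1) ≤ K * J ^ s := by
      rw [pow_succ']; exact Ideal.mul_mono (hJ'J.trans hK) (Ideal.pow_right_mono hJ'J _)
    have hsub2 : K * J' ^ (s + 1) ≤ J' ^ (s + 1) := Ideal.mul_le_right
    have hsub3 : K * J' ^ (s + 1) ≤ K * J ^ (s + 1) :=
      Ideal.mul_mono_right (Ideal.pow_right_mono hJ'J _)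
    obtain ⟨b, hb, c', hc', rfl⟩ := mem_decomp (pow_decomp J' f s hc)
    obtain ⟨u, hu, v, hv, huv⟩ := mem_decomp (K_decomp K J' f s hxc)
    have e1 : x * b - u ∈ J' ^ (s + 1) := by
      apply h.nzd_pow hf (s + 1)
      have : f * (x * b - u) = v - x * c' := by linear_combination huv
      rw [this]
      exact sub_mem (hsub2 hv) (Ideal.mul_mem_left _ _ hc')
    have e2 : b ∈ K * J ^ s := by
      apply ih b hb
      have := add_mem (hsub e1) hu
      simpa using this
    have e3 : f * b ∈ K * J ^ (s + 1) := by
      have := Ideal.mul_mem_mul hfJ e2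
      rwa [mul_left_comm, ← pow_succ'] at this
    have e4 : x * c' ∈ K * J ^ (s + 1) := by
      have := sub_mem hxc (Ideal.mul_mem_left _ x e3)
      rwa [mul_add, add_sub_cancel_left] at this
    obtain ⟨u, hu, v, hv, huv⟩ := mem_decomp (K_decomp K J' f s e4)
    have e5 : u ∈ J' ^ (s + 1) := by
      apply h.nzd_pow hf (s + 1)
      have : f * u = x * c' - v := by linear_combination -huv
      rw [this]
      exact sub_mem (Ideal.mul_mem_left _ _ hc') (hsub2 hv)
    have e6 : c' ∈ K * J' ^ (s + 1) := by
      apply h K (hJ'J.trans hK) x hx (s + 1) c' hc'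
      rw [huv]
      exact add_mem (Ideal.mul_mem_mul (hK hfJ) e5) hv
    exact add_mem e3 (hsub3 e6)

/-- The colon statement. -/
lemma colon_step {J' : Ideal R} (h : Good J') {f : R} (hf : Nzd f J') (s : ℕ) (y : R)
    (hy : f * y ∈ (J' ⊔ Ideal.span {f}) ^ (s + 1)) : y ∈ (J' ⊔ Ideal.span {f}) ^ s := by
  obtain ⟨b, hb, c', hc', e⟩ := mem_decomp (pow_decomp J' f s hy)
  have e1 : y - b ∈ J' ^ (s + 1) := by
    apply h.nzd_pow hf (s + 1)
    rw [mul_sub, e, add_sub_cancel_left]; exact hc'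
  have := add_mem (Ideal.pow_le_pow_right (Nat.le_succ s)
    (Ideal.pow_right_mono (le_sup_left : J' ≤ J' ⊔ Ideal.span {f}) _ e1)) hb
  simpa using this

lemma colon_pow {J' : Ideal R} (h : Good J') {f : R} (hf : Nzd f J') (s : ℕ) (y : R)
    (hy : f ^ s * y ∈ (J' ⊔ Ideal.span {f}) ^ (s + 1)) : y ∈ (J' ⊔ Ideal.span {f}) := by
  induction s with
  | zero => simpa using hy
  | succ s ih =>
    apply ih
    apply colon_step h hf
    rwa [← mul_assoc, ← pow_succ']

/-- Partial ideals of a sequence. -/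
def chain (g : ℕ → R) : ℕ → Ideal R
  | 0 => ⊥
  | i + 1 => chain g i ⊔ Ideal.span {g i}

lemma chain_good (g : ℕ → R) (r : ℕ) (h : ∀ i < r, Nzd (g i) (chain g i)) :
    Good (chain g r) := by
  induction r with
  | zero => exact good_bot
  | succ r ih => exact good_step (ih fun i hi => h i (by omega)) (h r (by omega))

end alg

section graded
variable {F : Type*} [Field F] {n : ℕ}

local notation "𝒮" => MvPolynomial (Fin (n + 1)) F

lemma comp_mul {d : ℕ} {f : 𝒮} (hf : f.IsHomogeneous d) (a : 𝒮) (k : ℕ) :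
    homogeneousComponent (k + d) (a * f) = homogeneousComponent k a * f := by
  conv_lhs => rw [← sum_homogeneousComponent a, Finset.sum_mul, map_sum]
  have : ∀ i, homogeneousComponent (k + d) (homogeneousComponent i a * f)
      = if i = k then homogeneousComponent k a * f else 0 := by
    intro i
    have hh : (homogeneousComponent i a * f).IsHomogeneous (i + d) :=
      (homogeneousComponent_isHomogeneous i a).mul hf
    rw [homogeneousComponent_of_mem hh]
    by_cases h : i = k
    · subst h; simp
    · rw [if_neg h, if_neg (by omega)]
  simp only [this, Finset.sum_ite_eq', Finset.mem_range]
  split_ifs with h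
  · rfl
  · rw [homogeneousComponent_eq_zero _ _ (by omega), zero_mul]

lemma comp_mul_lt {d : ℕ} {f : 𝒮} (hf : f.IsHomogeneous d) (a : 𝒮) (k : ℕ) (hk : k < d) :
    homogeneousComponent k (a * f) = 0 := by
  rw [← sum_homogeneousComponent a, Finset.sum_mul, map_sum]
  refine Finset.sum_eq_zero fun i _ => ?_
  have hh : (homogeneousComponent i a * f).IsHomogeneous (i + d) :=
    (homogeneousComponent_isHomogeneous i a).mul hf
  rw [homogeneousComponent_of_mem hh, if_neg (by omega)]

/-- Homogeneous ideals. -/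
def Hmg (J : Ideal 𝒮) : Prop := ∀ g ∈ J, ∀ k, homogeneousComponent k g ∈ J

lemma hmg_bot : Hmg (⊥ : Ideal 𝒮) := by
  intro g hg k
  simp at hg; simp [hg]

lemma hmg_step {J : Ideal 𝒮} (hJ : Hmg J) {d : ℕ} {f : 𝒮} (hf : f.IsHomogeneous d) :
    Hmg (J ⊔ Ideal.span {f}) := by
  intro g hg k
  obtain ⟨y, hy, z, hz, rfl⟩ := Submodule.mem_sup.1 hg
  obtain ⟨a, rfl⟩ := Ideal.mem_span_singleton'.1 hz
  rw [map_add]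
  refine add_mem (Ideal.mem_sup_left (hJ y hy k)) (Ideal.mem_sup_right ?_)
  rw [Ideal.mem_span_singleton']
  by_cases hk : k < d
  · exact ⟨0, by rw [comp_mul_lt hf a k hk, zero_mul]⟩
  · obtain ⟨j, rfl⟩ := Nat.exists_eq_add_of_le' (not_lt.1 hk)
    exact ⟨_, (comp_mul hf a j).symm⟩

/-- Degree `k` piece of `J`. -/
noncomputable def piece (J : Ideal 𝒮) (k : ℕ) : Submodule F 𝒮 :=
  J.restrictScalars F ⊓ homogeneousSubmodule (Fin (n + 1)) F k

lemma mem_piece {J : Ideal 𝒮} {k : ℕ} {g : 𝒮} : g ∈ piece J k ↔ g ∈ J ∧ g.IsHomogeneous k :=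
  Iff.rfl

instance fd_hom (k : ℕ) : FiniteDimensional F (homogeneousSubmodule (Fin (n + 1)) F k) :=
  Module.Finite.iff_fg.2 (homogeneousSubmodule_fg _ _ k)

instance fd_piece (J : Ideal 𝒮) (k : ℕ) : FiniteDimensional F (piece J k) :=
  Submodule.finiteDimensional_of_le (inf_le_right : _ ≤ homogeneousSubmodule (Fin (n + 1)) F k)

lemma piece_lt {J : Ideal 𝒮} (hJ : Hmg J) {d : ℕ} {f : 𝒮} (hf : f.IsHomogeneous d) {k : ℕ}
    (hk : k < d) : piece (J ⊔ Ideal.span {f}) k = piece J k := by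
  ext g
  simp only [mem_piece]
  refine and_congr_left fun hg => ⟨fun h => ?_, fun h => Ideal.mem_sup_left h⟩
  obtain ⟨y, hy, z, hz, rfl⟩ := Submodule.mem_sup.1 h
  obtain ⟨a, rfl⟩ := Ideal.mem_span_singleton'.1 hz
  rw [← homogeneousComponent_eq_self hg, map_add, comp_mul_lt hf a k hk, add_zero]
  exact hJ y hy k

lemma piece_add {J : Ideal 𝒮} (hJ : Hmg J) {d : ℕ} {f : 𝒮} (hf : f.IsHomogeneous d) (k : ℕ) :
    piece (J ⊔ Ideal.span {f}) (k + d) = piece J (k + d) ⊔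
      (homogeneousSubmodule (Fin (n + 1)) F k).map (LinearMap.mulRight F f) := by
  apply le_antisymm
  · rintro g ⟨h, hg⟩
    have hg : g.IsHomogeneous (k + d) := hg
    obtain ⟨y, hy, z, hz, rfl⟩ := Submodule.mem_sup.1 (show g ∈ J ⊔ Ideal.span {f} from h)
    obtain ⟨a, rfl⟩ := Ideal.mem_span_singleton'.1 hz
    rw [← homogeneousComponent_eq_self hg, map_add, comp_mul hf a k]
    refine Submodule.add_mem_sup ⟨hJ y hy _, homogeneousComponent_isHomogeneous _ _⟩ ?_
    exact ⟨_, homogeneousComponent_isHomogeneous k a, rfl⟩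
  · refine sup_le ?_ ?_
    · rintro g ⟨h, hg⟩
      exact ⟨Ideal.mem_sup_left h, hg⟩
    · rintro _ ⟨a, ha, rfl⟩
      refine ⟨Ideal.mem_sup_right (Ideal.mem_span_singleton'.2 ⟨a, rfl⟩), ?_⟩
      exact IsHomogeneous.mul ha hf

lemma piece_inf {J : Ideal 𝒮} {d : ℕ} {f : 𝒮} (hf : f.IsHomogeneous d)
    (hn : Nzd f J) (k : ℕ) :
    piece J (k + d) ⊓ (homogeneousSubmodule (Fin (n + 1)) F k).map (LinearMap.mulRight F f) =
      (piece J k).map (LinearMap.mulRight F f) := by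
  ext g
  constructor
  · rintro ⟨⟨h1, h2⟩, ⟨a, ha, rfl⟩⟩
    refine ⟨a, ⟨hn a ?_, ha⟩, rfl⟩
    rw [mul_comm]; exact h1
  · rintro ⟨a, ⟨ha, ha'⟩, rfl⟩
    exact ⟨⟨Ideal.mul_mem_right _ _ ha, IsHomogeneous.mul ha' hf⟩, ⟨a, ha', rfl⟩⟩

open Module in
lemma finrank_step {J : Ideal 𝒮} (hJ : Hmg J) {d : ℕ} {f : 𝒮} (hf : f.IsHomogeneous d)
    (hn : Nzd f J) (hf0 : f ≠ 0) (k : ℕ) :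
    finrank F (piece (J ⊔ Ideal.span {f}) (k + d)) + finrank F (piece J k) =
      finrank F (piece J (k + d)) + finrank F (homogeneousSubmodule (Fin (n + 1)) F k) := by
  have hinj : Function.Injective (LinearMap.mulRight F f) := fun a b h =>
    mul_right_cancel₀ hf0 h
  have := Submodule.finrank_sup_add_finrank_inf_eq (piece J (k + d))
    ((homogeneousSubmodule (Fin (n + 1)) F k).map (LinearMap.mulRight F f))
  rw [← piece_add hJ hf, piece_inf hf hn] at this
  rw [← (Submodule.equivMapOfInjective _ hinj (piece J k)).finrank_eq,
    ← (Submodule.equivMapOfInjective _ hinj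
      (homogeneousSubmodule (Fin (n + 1)) F k)).finrank_eq] at this
  exact this

/-- Hilbert series of `S/J`. -/
noncomputable def hilb (J : Ideal 𝒮) : PowerSeries ℤ :=
  PowerSeries.mk fun k => (Module.finrank F (homogeneousSubmodule (Fin (n + 1)) F k) : ℤ) -
    Module.finrank F (piece J k)

lemma hilb_step {J : Ideal 𝒮} (hJ : Hmg J) {d : ℕ} {f : 𝒮} (hf : f.IsHomogeneous d)
    (hn : Nzd f J) (hf0 : f ≠ 0) :
    hilb (J ⊔ Ideal.span {f}) = hilb J * (1 - PowerSeries.X ^ d) := by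
  ext k
  rw [mul_sub, mul_one, map_sub, PowerSeries.coeff_mul_X_pow']
  simp only [hilb, PowerSeries.coeff_mk]
  split_ifs with h
  · obtain ⟨j, rfl⟩ := Nat.exists_eq_add_of_le' h
    have := finrank_step hJ hf hn hf0 j
    rw [Nat.add_sub_cancel]
    omega
  · rw [piece_lt hJ hf (by omega)]; simp

lemma finrank_hom (k : ℕ) :
    Module.finrank F (homogeneousSubmodule (Fin (n + 1)) F k) = (n + k).choose n := by
  rw [homogeneousSubmodule_eq_finsupp_supported]
  have hs : {m : Fin (n + 1) →₀ ℕ | m.degree = k} =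
      ((Finset.univ : Finset (Fin (n + 1))).finsuppAntidiag k : Set (Fin (n + 1) →₀ ℕ)) := by
    ext m; simp [Finsupp.degree_eq_sum]
  rw [hs, (AddMonoidAlgebra.supportedEquivFinsupp (R := F) (S := F) _).finrank_eq,
    Module.finrank_finsupp_self]
  simp only [Finset.coe_sort_coe, Fintype.card_coe, Finset.card_finsuppAntidiag_nat_eq_choose,
    Finset.card_univ, Fintype.card_fin]
  rw [show n + 1 + k - 1 = n + k by omega, Nat.choose_symm_add]

lemma hilb_bot : hilb (⊥ : Ideal 𝒮) * (1 - PowerSeries.X) ^ (n + 1) = 1 := by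
  refine Eq.trans ?_ (PowerSeries.mk_add_choose_mul_one_sub_pow_eq_one ℤ n)
  congr 1
  ext k
  have : piece (⊥ : Ideal 𝒮) k = ⊥ := by
    rw [eq_bot_iff]; rintro g ⟨h, _⟩; exact h
  simp [hilb, finrank_hom, this]

lemma chain_hmg {d : ℕ} (g : ℕ → 𝒮) (r : ℕ) (hg : ∀ i < r, (g i).IsHomogeneous d) :
    Hmg (chain g r) := by
  induction r with
  | zero => exact hmg_bot
  | succ r ih => exact hmg_step (ih fun i hi => hg i (by omega)) (hg r (by omega))

lemma hilb_chain {d : ℕ} (g : ℕ → 𝒮) (r : ℕ) (hg : ∀ i < r, (g i).IsHomogeneous d)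
    (hg0 : ∀ i < r, g i ≠ 0)
    (h : ∀ i < r, Nzd (g i) (chain g i)) :
    hilb (chain g r) = hilb (⊥ : Ideal 𝒮) * (1 - PowerSeries.X ^ d) ^ r := by
  induction r with
  | zero => simp [chain]
  | succ r ih =>
    have h1 := ih (fun i hi => hg i (by omega)) (fun i hi => hg0 i (by omega))
      (fun i hi => h i (by omega))
    rw [chain, hilb_step (chain_hmg g r fun i hi => hg i (by omega)) (hg r (by omega))
      (h r (by omega)) (hg0 r (by omega)), h1, pow_succ, mul_assoc]

/-- The polynomial `(1 + X + ... + X^(d-1))^(n+1)`. -/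
noncomputable def hp (d n : ℕ) : Polynomial ℤ := (∑ i ∈ Finset.range d, Polynomial.X ^ i) ^ (n + 1)

lemma hilb_full {d : ℕ} (g : ℕ → 𝒮) (hg : ∀ i < n + 1, (g i).IsHomogeneous d)
    (hg0 : ∀ i < n + 1, g i ≠ 0)
    (h : ∀ i < n + 1, Nzd (g i) (chain g i)) :
    hilb (chain g (n + 1)) = (hp d n : PowerSeries ℤ) := by
  have e : (1 - PowerSeries.X ^ d : PowerSeries ℤ) =
      (1 - PowerSeries.X) * ((∑ i ∈ Finset.range d, Polynomial.X ^ i : Polynomial ℤ) :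
        PowerSeries ℤ) := by
    have := congrArg (fun p : Polynomial ℤ => (p : PowerSeries ℤ))
      (mul_neg_geom_sum (Polynomial.X : Polynomial ℤ) d)
    simpa using this.symm
  rw [hilb_chain g (n + 1) hg hg0 h, e, mul_pow, ← mul_assoc, hilb_bot, one_mul, hp]
  simp

lemma geom_monic {d : ℕ} (hd : 1 ≤ d) :
    (∑ i ∈ Finset.range d, Polynomial.X ^ i : Polynomial ℤ).Monic :=
  Polynomial.Monic.geom_sum' Polynomial.monic_X (by simp) (by omega)

lemma hp_monic {d : ℕ} (hd : 1 ≤ d) : (hp d n).Monic := (geom_monic hd).pow _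

lemma hp_natDegree {d : ℕ} (hd : 1 ≤ d) : (hp d n).natDegree = (n + 1) * (d - 1) := by
  rw [hp, (geom_monic hd).natDegree_pow]
  congr 1
  obtain ⟨e, rfl⟩ := Nat.exists_eq_add_of_le' hd
  have h := Polynomial.Monic.natDegree_mul (geom_monic hd) (Polynomial.monic_X_sub_C (1 : ℤ))
  rw [Polynomial.natDegree_X_sub_C] at h
  have h2 := geom_sum_mul (Polynomial.X : Polynomial ℤ) (e + 1)
  rw [Polynomial.C_1, h2, ← Polynomial.C_1, Polynomial.natDegree_X_pow_sub_C] at h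
  omega

/-- Everything of large degree lies in `I`. -/
lemma top_le {J : Ideal 𝒮} {k : ℕ} (h : PowerSeries.coeff k (hilb J) = 0) (g : 𝒮)
    (hg : g.IsHomogeneous k) : g ∈ J := by
  simp only [hilb, PowerSeries.coeff_mk] at h
  have hle : piece J k ≤ homogeneousSubmodule (Fin (n + 1)) F k := inf_le_right
  have := Submodule.eq_of_le_of_finrank_eq hle (by omega)
  have h2 : g ∈ piece J k := by rw [this]; exact hg
  exact h2.1

lemma exists_not_mem {J : Ideal 𝒮} {k : ℕ} (h : PowerSeries.coeff k (hilb J) ≠ 0) :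
    ∃ g : 𝒮, g.IsHomogeneous k ∧ g ∉ J := by
  by_contra! hc
  apply h
  have : piece J k = homogeneousSubmodule (Fin (n + 1)) F k :=
    le_antisymm inf_le_right fun g hg => ⟨hc g hg, hg⟩
  simp only [hilb, PowerSeries.coeff_mk]
  rw [this, sub_self]

lemma mem_pow_of_hom {k : ℕ} {g : 𝒮} (hg : g.IsHomogeneous k) :
    g ∈ Ideal.span (Set.range (X : Fin (n + 1) → 𝒮)) ^ k := by
  rw [mem_pow_idealOfVars_iff]
  intro x hx
  exact (hg.degree_eq_sum_deg_support hx).le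

lemma pow_le_of_hom {k : ℕ} {J : Ideal 𝒮} (h : ∀ g : 𝒮, g.IsHomogeneous k → g ∈ J) :
    Ideal.span (Set.range (X : Fin (n + 1) → 𝒮)) ^ k ≤ J := by
  rw [pow_idealOfVars_eq_span, Ideal.span_le]
  rintro _ ⟨m, hm, rfl⟩
  exact h _ (isHomogeneous_monomial _ hm)

/-- Upper bound, all `t`. -/
lemma upper {d e : ℕ} (f : Fin (n + 1) → 𝒮) (hf : ∀ i, (f i).IsHomogeneous d)
    (h : ∀ k, e + d ≤ k → ∀ g : 𝒮, g.IsHomogeneous k → g ∈ Ideal.span (Set.range f)) (t : ℕ) :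
    ∀ g : 𝒮, g.IsHomogeneous ((t + 1) * d + e) → g ∈ Ideal.span (Set.range f) ^ (t + 1) := by
  induction t with
  | zero => intro g hg; rw [zero_add, pow_one]; exact h _ (by omega) g hg
  | succ t ih =>
    intro g hg
    have h1 := h _ (by nlinarith) g hg
    obtain ⟨c, hc⟩ := (Ideal.mem_span_range_iff_exists_fun).1 h1
    have hg' : g.IsHomogeneous (((t + 1) * d + e) + d) := by
      convert hg using 1; ring
    rw [← homogeneousComponent_eq_self hg', ← hc, map_sum]
    refine Ideal.sum_mem _ fun i _ => ?_
    rw [comp_mul (hf i), pow_succ]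
    exact Ideal.mul_mem_mul (ih _ (homogeneousComponent_isHomogeneous _ _))
      (Ideal.subset_span ⟨i, rfl⟩)

end graded
end Stmt9

theorem stmt_9 {F : Type*} [Field F] (n : ℕ) (d : ℕ)
    (f : Fin (n + 1) → MvPolynomial (Fin (n + 1)) F)
    (hdeg : ∀ i, f i ∈ homogeneousSubmodule (Fin (n + 1)) F d)
    (hreg : RingTheory.Sequence.IsRegular (MvPolynomial (Fin (n + 1)) F) (List.ofFn f))
    (I : Ideal (MvPolynomial (Fin (n + 1)) F)) (hI : I = Ideal.span (Set.range f))
    (t : ℕ) (ht : 1 ≤ t) :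
    Ideal.span (Set.range (X : Fin (n + 1) → MvPolynomial (Fin (n + 1)) F)) ^
        (t * d + n * (d - 1)) ≤ I ^ t ∧
      ¬ Ideal.span (Set.range (X : Fin (n + 1) → MvPolynomial (Fin (n + 1)) F)) ^
          (t * d + n * (d - 1) - 1) ≤ I ^ t := by
  classical
  let g : ℕ → MvPolynomial (Fin (n + 1)) F := fun i => if h : i < n + 1 then f ⟨i, h⟩ else 0
  have hgi : ∀ i (h : i < n + 1), g i = f ⟨i, h⟩ := fun i h => dif_pos h
  have hlen : (List.ofFn f).length = n + 1 := List.length_ofFn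
  have hchain : ∀ i, i ≤ n + 1 → Stmt9.chain g i = Ideal.ofList ((List.ofFn f).take i) := by
    intro i
    induction i with
    | zero => intro _; simp [Stmt9.chain]
    | succ i ih =>
      intro hi
      rw [List.take_succ_eq_append_getElem (by omega), Ideal.ofList_append,
        Ideal.ofList_singleton, Stmt9.chain, ih (by omega), hgi i (by omega), List.getElem_ofFn]
  have hnzd : ∀ i < n + 1, Stmt9.Nzd (g i) (Stmt9.chain g i) := by
    intro i hi y hy
    have h1 := hreg.regular_mod_prev i (by omega)
    rw [List.getElem_ofFn] at h1
    rw [hchain i hi.le] at hy ⊢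
    rw [hgi i hi] at hy
    have htop : (Ideal.ofList ((List.ofFn f).take i) • ⊤ :
      Submodule (MvPolynomial (Fin (n + 1)) F) (MvPolynomial (Fin (n + 1)) F)) =
        Ideal.ofList ((List.ofFn f).take i) := by simp
    rw [htop] at h1
    have h2 := h1 (a₁ := Submodule.Quotient.mk y) (a₂ := 0) (by
      simp only [smul_zero]
      rw [← Submodule.Quotient.mk_smul, Submodule.Quotient.mk_eq_zero]
      exact hy)
    exact (Submodule.Quotient.mk_eq_zero _).1 h2
  have hIc : I = Stmt9.chain g (n + 1) := by
    rw [hchain _ le_rfl, hI, List.take_of_length_le (by omega), Ideal.ofList]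
    congr 1
    ext x
    exact (List.mem_ofFn (f := f) (a := x)).symm
  have hItop : I ≠ ⊤ := by
    have := hreg.top_ne_smul
    rw [hIc, hchain _ le_rfl, List.take_of_length_le (by omega)]
    intro h
    rw [h] at this
    simp at this
  have hg0 : ∀ i < n + 1, g i ≠ 0 := by
    intro i hi h0
    have h1 := hnzd i hi 1 (by rw [h0, zero_mul]; exact zero_mem _)
    apply hItop
    rw [Ideal.eq_top_iff_one, hIc, hchain _ le_rfl]
    rw [hchain _ hi.le] at h1
    refine Ideal.span_mono ?_ h1
    intro x hx
    rw [List.take_of_length_le (by omega)]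
    exact List.mem_of_mem_take hx
  have hghom : ∀ i < n + 1, (g i).IsHomogeneous d := fun i hi => by
    rw [hgi i hi]; exact hdeg _
  have hd : 1 ≤ d := by
    by_contra hd
    obtain rfl : d = 0 := by omega
    have h0 := hdeg 0
    rw [mem_homogeneousSubmodule] at h0
    have h1 : f 0 = C (coeff 0 (f 0)) := by
      rw [← homogeneousComponent_zero, homogeneousComponent_eq_self h0]
    have h2 : f 0 ≠ 0 := by have := hg0 0 (by omega); rwa [hgi 0 (by omega)] at this
    have h3 : coeff 0 (f 0) ≠ 0 := fun h => h2 (by rw [h1, h, C_0])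
    apply hItop
    rw [hI]
    refine Ideal.eq_top_of_isUnit_mem _ (Ideal.subset_span ⟨0, rfl⟩) ?_
    rw [h1]
    exact (isUnit_iff_ne_zero.2 h3).map C
  have hH := Stmt9.hilb_full g hghom hg0 hnzd
  rw [← hIc] at hH
  have hdn : (n + 1) * (d - 1) + 1 = n * (d - 1) + d := by
    rw [add_mul]; omega
  obtain ⟨s, rfl⟩ := Nat.exists_eq_add_of_le' ht
  constructor
  · apply Stmt9.pow_le_of_hom
    rw [hI]
    apply Stmt9.upper f hdeg
    intro k hk p hp
    rw [← hI]
    refine Stmt9.top_le ?_ p hp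
    rw [hH, Polynomial.coeff_coe]
    apply Polynomial.coeff_eq_zero_of_natDegree_lt
    rw [Stmt9.hp_natDegree hd]; omega
  · intro hle
    obtain ⟨p, hp, hpI⟩ := Stmt9.exists_not_mem (J := I) (k := (n + 1) * (d - 1)) (by
      rw [hH, Polynomial.coeff_coe, ← Stmt9.hp_natDegree hd, (Stmt9.hp_monic hd).coeff_natDegree]
      exact one_ne_zero)
    apply hpI
    have hhom : (g n ^ s * p).IsHomogeneous ((s + 1) * d + n * (d - 1) - 1) := by
      have := ((hghom n (by omega)).pow s).mul hp
      convert this using 1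
      rw [add_mul s 1 d, mul_comm d s]; omega
    have h1 := hle (Stmt9.mem_pow_of_hom hhom)
    rw [hIc] at h1 ⊢
    exact Stmt9.colon_pow (Stmt9.chain_good g n fun i hi => hnzd i (by omega))
      (hnzd n (by omega)) s p h1
end
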